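/- No computably enumerable prefix-free set of binary strings contains a Σ^0_1(∅') subset whose measure is a 2-random real. More generally, for every n ∈ ℕ and every Σ^0_{n+1} prefix-free set of binary strings, no Σ^0_{n+2} subset of this set has measure an (n+2)-random real. -/

import Mathlib

open scoped Classical
open MeasureTheory

namespace RandProb

/-- Cantor space: the space of infinite binary sequences. -/
abbrev Cantor := ℕ → Bool

/-! ### Oracle partial recursive functions, via codes -/

/-- Codes for partial recursive functions with access to an oracle `O : ℕ → ℕ`.
These codes play the role of (oracle) Turing machines. -/
inductive CodeO : Type
  | zero : CodeO
  | succ : CodeO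
  | left : CodeO
  | right : CodeO
  | oracle : CodeO
  | pair : CodeO → CodeO → CodeO
  | comp : CodeO → CodeO → CodeO
  | prec : CodeO → CodeO → CodeO
  | rfind' : CodeO → CodeO

/-- Evaluation of an oracle code with (total) oracle `O`. -/
def CodeO.eval (O : ℕ → ℕ) : CodeO → ℕ →. ℕ
  | .zero => pure 0
  | .succ => Nat.succ
  | .left => ↑fun n : ℕ => n.unpair.1
  | .right => ↑fun n : ℕ => n.unpair.2
  | .oracle => ↑fun n : ℕ => O n
  | .pair cf cg => fun n => Nat.pair <$> cf.eval O n <*> cg.eval O n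
  | .comp cf cg => fun n => cg.eval O n >>= cf.eval O
  | .prec cf cg =>
    Nat.unpaired fun a n =>
      n.rec (cf.eval O a) fun y IH => do
        let i ← IH
        cg.eval O (Nat.pair a (Nat.pair y i))
  | .rfind' cf =>
    Nat.unpaired fun a m =>
      (Nat.rfind fun n => (fun m => m = 0) <$> cf.eval O (Nat.pair a (n + m))).map (· + m)

/-- A canonical injective numbering of oracle codes. -/
def CodeO.encode : CodeO → ℕ
  | .zero => 0
  | .succ => 1
  | .left => 2
  | .right => 3
  | .oracle => 4
  | .pair cf cg => 2 * (2 * Nat.pair cf.encode cg.encode) + 5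
  | .comp cf cg => 2 * (2 * Nat.pair cf.encode cg.encode + 1) + 5
  | .prec cf cg => 2 * (2 * Nat.pair cf.encode cg.encode) + 6
  | .rfind' cf => 2 * (2 * cf.encode + 1) + 6

/-- The Turing jump of an oracle: the halting problem relative to `O`,
as a `{0,1}`-valued function. -/
noncomputable def jump (O : ℕ → ℕ) : ℕ → ℕ := fun e =>
  if ∃ c : CodeO, c.encode = e ∧ (c.eval O e).Dom then 1 else 0

/-- `iterJump n` is `∅^(n)`, the `n`-th iterate of the halting problem (as an oracle). -/
noncomputable def iterJump : ℕ → ℕ → ℕ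
  | 0 => fun _ => 0
  | n + 1 => jump (iterJump n)

/-- `S ⊆ ℕ` is computably enumerable relative to the oracle `O`. -/
def CeIn (O : ℕ → ℕ) (S : Set ℕ) : Prop := ∃ c : CodeO, S = {m | (c.eval O m).Dom}

/-- The left Dedekind cut of `α` (as a set of codes of rationals) is c.e. in `O`. -/
def LeftCeIn (O : ℕ → ℕ) (α : ℝ) : Prop :=
  CeIn O {m | ∃ q : ℚ, Encodable.encode q = m ∧ (q : ℝ) < α}

/-- The right Dedekind cut of `α` (as a set of codes of rationals) is c.e. in `O`. -/
def RightCeIn (O : ℕ → ℕ) (α : ℝ) : Prop :=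
  CeIn O {m | ∃ q : ℚ, Encodable.encode q = m ∧ α < (q : ℝ)}

/-! ### Martin-Löf randomness for real numbers -/

/-- The `i`-th component of a Martin-Löf test coded by the set `W ⊆ ℕ`:
the union of all open rational intervals whose codes are enumerated into the
`i`-th section of `W`. -/
def testSet (W : Set ℕ) (i : ℕ) : Set ℝ :=
  {x | ∃ p q : ℚ, Nat.pair i (Encodable.encode (p, q)) ∈ W ∧ (p : ℝ) < x ∧ x < (q : ℝ)}

/-- `α` is Martin-Löf random relative to the oracle `O`. -/
def MLRandomIn (O : ℕ → ℕ) (α : ℝ) : Prop :=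
  ∀ W : Set ℕ, CeIn O W →
    (∀ i, volume (testSet W i) ≤ ENNReal.ofReal ((2 : ℝ)⁻¹ ^ i)) →
    ∃ i, α ∉ testSet W i

/-- `α` is `n`-random: Martin-Löf random relative to `∅^(n-1)`. -/
def NRandom (n : ℕ) (α : ℝ) : Prop := MLRandomIn (iterJump (n - 1)) α

/-! ### The uniform measure on Cantor space -/

/-- The binary digits of a real number (meaningful on `[0,1)`). -/
noncomputable def digits (x : ℝ) : Cantor := fun n => decide (⌊x * 2 ^ (n + 1)⌋ % 2 = 1)

/-- The uniform (Lebesgue) product measure on Cantor space, obtained as the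
pushforward of Lebesgue measure on `[0,1)` under the binary-digit map. -/
noncomputable def mu : Measure Cantor :=
  Measure.map digits (volume.restrict (Set.Ico (0 : ℝ) 1))

/-- The uniform measure of a set of elements of Cantor space, as a real number. -/
noncomputable def muR (S : Set Cantor) : ℝ := (mu S).toReal

/-! ### Strings, prefixes and cylinders -/

/-- The length-`n` initial segment of `X ∈ 2^ω`, as a finite binary string. -/
def initSeg (X : Cantor) (n : ℕ) : List Bool := (List.range n).map X

/-- `⟦S⟧`: the elements of Cantor space having a prefix in the set of strings `S`. -/
def cyl (S : Set (List Bool)) : Set Cantor := {X | ∃ n, initSeg X n ∈ S}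

/-- A set of strings is prefix-free if none of its elements properly extends another. -/
def IsPrefixFree (S : Set (List Bool)) : Prop := ∀ σ ∈ S, ∀ τ ∈ S, σ <+: τ → σ = τ

/-- A set of strings is upward closed if it is closed under taking extensions. -/
def UpClosed (S : Set (List Bool)) : Prop := ∀ σ ∈ S, ∀ τ, σ <+: τ → τ ∈ S

/-- Two strings are compatible if one is a prefix of the other. -/
def Compatible (σ τ : List Bool) : Prop := σ <+: τ ∨ τ <+: σ

/-! ### Oracle machines -/

/-- An element of Cantor space viewed as a `{0,1}`-valued oracle. -/
def oX (X : Cantor) : ℕ → ℕ := fun n => cond (X n) 1 0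

/-- `evalO X c n`: the (possibly divergent) output of the oracle machine `c`
on input `n` with oracle `X`. -/
def evalO (X : Cantor) (c : CodeO) (n : ℕ) : Part ℕ := c.eval (oX X) n

/-- The oracle obtained by writing the string `ρ` before the bits of `X`. -/
def prepend (ρ : List Bool) (X : Cantor) : Cantor := fun n =>
  if n < ρ.length then ρ.getD n false else X (n - ρ.length)

/-- `X ∈ 2^ω` extends the finite string `ρ`. -/
def Extends (X : Cantor) (ρ : List Bool) : Prop := initSeg X ρ.length = ρ

/-- `u` is a universal oracle machine: some effective, prefix-free translation
`c ↦ σ_c` satisfies `u(σ_c * X, n) ≃ c(X, n)` for all machines `c`. -/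
def UniversalOM (u : CodeO) : Prop :=
  ∃ σ : CodeO → List Bool,
    (∃ f : ℕ → ℕ, Computable f ∧ ∀ c : CodeO, f c.encode = Encodable.encode (σ c)) ∧
    IsPrefixFree (Set.range σ) ∧
    ∀ (c : CodeO) (X : Cantor) (n : ℕ), evalO (prepend (σ c) X) u n = evalO X c n

/-- `TOT(c)`: the oracles `X` such that the function `c(X)` is total. -/
def TOT (c : CodeO) : Set Cantor := {X | ∀ n, (evalO X c n).Dom}

/-- The domain of the partial function `c(X)`. -/
def domSet (c : CodeO) (X : Cantor) : Set ℕ := {n | (evalO X c n).Dom}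

/-- The range of the partial function `c(X)`. -/
def ranSet (c : CodeO) (X : Cantor) : Set ℕ := {v | ∃ n, v ∈ evalO X c n}

/-- `INF(c)`: the oracles `X` such that `c(X)` has infinite domain. -/
def INF (c : CodeO) : Set Cantor := {X | (domSet c X).Infinite}

/-- `COF(c)`: the oracles `X` such that `c(X)` has cofinite domain. -/
def COF (c : CodeO) : Set Cantor := {X | (domSet c X)ᶜ.Finite}

/-- `COM(c)`: the oracles `X` such that `c(X)` has computable domain. -/
def COM (c : CodeO) : Set Cantor := {X | ComputablePred fun n => n ∈ domSet c X}

/-- The characteristic function of a set of naturals. -/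
noncomputable def chi (A : Set ℕ) : ℕ → ℕ := fun n => if n ∈ A then 1 else 0

/-- Turing reducibility between sets of naturals. -/
def TuringLEs (B A : Set ℕ) : Prop := ∃ c : CodeO, ∀ n, c.eval (chi A) n = Part.some (chi B n)

/-- The halting problem `∅'` as a set of naturals. -/
noncomputable def HaltingSet : Set ℕ := {e | iterJump 1 e = 1}

/-- `COMPL(c)`: the oracles `X` such that the domain of `c(X)` computes the halting problem. -/
noncomputable def COMPL (c : CodeO) : Set Cantor := {X | TuringLEs HaltingSet (domSet c X)}

/-- Turing reducibility between total functions on ℕ. -/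
def TuringLEf (f g : ℕ → ℕ) : Prop := ∃ c : CodeO, ∀ n, c.eval g n = Part.some (f n)

/-- A real number viewed as an oracle, via its binary expansion. -/
noncomputable def realOracle (α : ℝ) : ℕ → ℕ := oX (digits α)

/-- Two reals have Turing-incomparable degrees. -/
noncomputable def TIncompReal (α β : ℝ) : Prop :=
  ¬ TuringLEf (realOracle α) (realOracle β) ∧ ¬ TuringLEf (realOracle β) (realOracle α)

/-! ### Arithmetical hierarchy -/

/-- Evaluation with the trivial (empty) oracle: ordinary partial recursion. -/
def eval0 (c : CodeO) : ℕ →. ℕ := c.eval fun _ => 0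

/-- `SigmaNumIdx n c` is the `Σ^0_{n+1}` subset of `ℕ` with index `c`. -/
def SigmaNumIdx : ℕ → CodeO → Set ℕ
  | 0, c => {m | (eval0 c m).Dom}
  | n + 1, c => {m | ∃ k, Nat.pair m k ∉ SigmaNumIdx n c}

/-- `S ⊆ ℕ` is `Σ^0_n` (intended for `n ≥ 1`). -/
def SigmaN (n : ℕ) (S : Set ℕ) : Prop := ∃ c : CodeO, S = SigmaNumIdx (n - 1) c

/-- The set of codes of the elements of a set of binary strings. -/
def strCodes (S : Set (List Bool)) : Set ℕ := {m | ∃ σ ∈ S, Encodable.encode σ = m}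

/-- A set of binary strings is `Σ^0_n`. -/
def SigmaStr (n : ℕ) (S : Set (List Bool)) : Prop := SigmaN n (strCodes S)

/-- A set of binary strings is `Π^0_n`: its complement is `Σ^0_n`. -/
def PiStr (n : ℕ) (S : Set (List Bool)) : Prop := SigmaStr n Sᶜ

/-- A set of binary strings is c.e. relative to the oracle `O`. -/
def CeStrIn (O : ℕ → ℕ) (S : Set (List Bool)) : Prop := CeIn O (strCodes S)

/-- `SigmaClassIdx n c m` is the `Σ^0_{n+1}` class of elements of Cantor space
with index `c` and parameter `m`. -/
def SigmaClassIdx : ℕ → CodeO → ℕ → Set Cantor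
  | 0, c, m => {X | (evalO X c m).Dom}
  | n + 1, c, m => {X | ∃ k, X ∉ SigmaClassIdx n c (Nat.pair m k)}

/-! ### Monotone machines -/

/-- A monotone machine: a partial computable, monotone map on finite binary strings. -/
structure MonoMachine where
  f : List Bool →. List Bool
  partrec : Partrec f
  mono : ∀ ⦃σ τ a b : List Bool⦄, σ <+: τ → a ∈ f σ → b ∈ f τ → a <+: b

/-- The oracles `X` such that the output of the monotone machine on `X` is infinite. -/
def MonoINF (M : MonoMachine) : Set Cantor :=
  {X | ∀ k, ∃ n a, a ∈ M.f (initSeg X n) ∧ k ≤ a.length}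

/-- The `k`-th bit of the output `M(X)` of a monotone machine is `b`. -/
def MonoMachine.hasBit (M : MonoMachine) (X : Cantor) (k : ℕ) (b : Bool) : Prop :=
  ∃ n a, a ∈ M.f (initSeg X n) ∧ a[k]? = some b

/-- `U` is a universal monotone machine. -/
def UniversalMono (U : MonoMachine) : Prop :=
  ∃ (M : ℕ → MonoMachine) (σ : ℕ → List Bool),
    Partrec₂ (fun (e : ℕ) (τ : List Bool) => (M e).f τ) ∧
    (∀ V : MonoMachine, ∃ e, (M e).f = V.f) ∧
    Computable σ ∧ IsPrefixFree (Set.range σ) ∧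
    ∀ e τ, U.f (σ e ++ τ) = (M e).f τ

/-! ### Infinitary self-delimiting machines -/

/-- Chaitin's infinitary self-delimiting machines: `f σ n` is the `n`-th approximation
of the output on program `σ` (`none` meaning divergence); the convergence relation is
decidable, approximations are monotone, and machines are self-delimiting. -/
structure InfMachine where
  f : List Bool → ℕ → Option (List Bool)
  computable : Computable₂ f
  mono : ∀ σ m n a, n < m → f σ m = some a → ∃ b, f σ n = some b ∧ b <+: a
  sd : ∀ σ τ n a, f σ n = some a → f (σ ++ τ) n = some a

/-- `M^∞(σ)↓`: all approximations converge. -/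
def InfMachine.domInf (M : InfMachine) (σ : List Bool) : Prop := ∀ n, M.f σ n ≠ none

/-- The domain of `M^∞`. -/
def InfMachine.DOM (M : InfMachine) : Set (List Bool) := {σ | M.domInf σ}

/-- The output `M^∞(σ)` is infinite (a stream). -/
def InfMachine.outInf (M : InfMachine) (σ : List Bool) : Prop :=
  ∀ k, ∃ n a, M.f σ n = some a ∧ k ≤ a.length

/-- `FIN(M^∞)`: programs in the domain with finite output. -/
def InfMachine.FIN (M : InfMachine) : Set (List Bool) := {σ | M.domInf σ ∧ ¬ M.outInf σ}

/-- `INF(M^∞)`: programs in the domain with infinite output. -/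
def InfMachine.INF (M : InfMachine) : Set (List Bool) := {σ | M.domInf σ ∧ M.outInf σ}

/-- The `k`-th bit of the output `M^∞(σ)` is `b`. -/
def InfMachine.hasBit (M : InfMachine) (σ : List Bool) (k : ℕ) (b : Bool) : Prop :=
  ∃ n a, M.f σ n = some a ∧ a[k]? = some b

/-- The domain of the prefix-free machine `M^*`: minimal strings in the domain of `M^∞`. -/
def InfMachine.DOMstar (M : InfMachine) : Set (List Bool) :=
  {σ | M.domInf σ ∧ ∀ τ, τ <+: σ → τ ≠ σ → ¬ M.domInf τ}

/-- Programs whose output is a stream with a tail of 1s. -/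
def InfMachine.COFout (M : InfMachine) : Set (List Bool) :=
  {σ | M.domInf σ ∧ M.outInf σ ∧ ∃ t, ∀ k, t ≤ k → M.hasBit σ k true}

/-- `A^∞(σ) ≃ B^∞(τ)`: both converge or both diverge, with equal outputs. -/
def InfAgree (A : InfMachine) (σ : List Bool) (B : InfMachine) (τ : List Bool) : Prop :=
  (A.domInf σ ↔ B.domInf τ) ∧ (A.domInf σ → ∀ k b, (A.hasBit σ k b ↔ B.hasBit τ k b))

/-- `U` is a universal infinitary self-delimiting machine. -/
def UniversalInf (U : InfMachine) : Prop :=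
  ∃ (M : ℕ → InfMachine) (σ : ℕ → List Bool),
    Computable (fun p : ℕ × List Bool × ℕ => (M p.1).f p.2.1 p.2.2) ∧
    (∀ V : InfMachine, ∃ e, ∀ τ, InfAgree (M e) τ V τ) ∧
    Computable σ ∧ IsPrefixFree (Set.range σ) ∧
    ∀ e τ, InfAgree U (σ e ++ τ) (M e) τ

end RandProb

namespace RandProb

/-- Evaluation of a code with a partial oracle. -/
def evalP (O : ℕ →. ℕ) : CodeO → ℕ →. ℕ
  | .zero => pure 0
  | .succ => Nat.succ
  | .left => ↑fun n : ℕ => n.unpair.1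
  | .right => ↑fun n : ℕ => n.unpair.2
  | .oracle => O
  | .pair cf cg => fun n => Nat.pair <$> evalP O cf n <*> evalP O cg n
  | .comp cf cg => fun n => evalP O cg n >>= evalP O cf
  | .prec cf cg =>
    Nat.unpaired fun a n =>
      n.rec (evalP O cf a) fun y IH => do
        let i ← IH
        evalP O cg (Nat.pair a (Nat.pair y i))
  | .rfind' cf =>
    Nat.unpaired fun a m =>
      (Nat.rfind fun n => (fun m => m = 0) <$> evalP O cf (Nat.pair a (n + m))).map (· + m)

theorem evalP_coe (O : ℕ → ℕ) (c : CodeO) : evalP (↑O) c = c.eval O := by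
  induction c with
  | zero => rfl
  | succ => rfl
  | left => rfl
  | right => rfl
  | oracle => rfl
  | pair cf cg h1 h2 => simp only [evalP, CodeO.eval, h1, h2]; rfl
  | comp cf cg h1 h2 => simp only [evalP, CodeO.eval, h1, h2]; rfl
  | prec cf cg h1 h2 => simp only [evalP, CodeO.eval, h1, h2]; rfl
  | rfind' cf h1 => simp only [evalP, CodeO.eval, h1]; rfl

/-- Initial segment of an oracle. -/
def seg (O : ℕ → ℕ) (l : ℕ) : List ℕ := (List.range l).map O

@[simp] theorem seg_length (O : ℕ → ℕ) (l : ℕ) : (seg O l).length = l := by simp [seg]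

theorem seg_take (O : ℕ → ℕ) (s t : ℕ) (h : s ≤ t) : (seg O t).take s = seg O s := by
  simp [seg, ← List.map_take, List.take_range, Nat.min_eq_left h]

theorem seg_get (O : ℕ → ℕ) (l n : ℕ) : (seg O l)[n]? = if n < l then some (O n) else none := by
  simp only [seg, List.getElem?_map, List.getElem?_range]
  split_ifs with h
  · simp [h]
  · simp [h]

theorem seg_succ (O : ℕ → ℕ) (l : ℕ) : seg O (l+1) = seg O l ++ [O l] := by
  simp [seg, List.range_succ]

/-- The partial oracle given by a list. -/
def lor (L : List ℕ) : ℕ →. ℕ := fun n => (L[n]? : Option ℕ)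

theorem mem_lor_seg (O : ℕ → ℕ) (l n y : ℕ) : y ∈ lor (seg O l) n ↔ n < l ∧ y = O n := by
  simp only [lor, seg_get]
  split_ifs with h <;> simp [h, eq_comm]

theorem mem_comp (O : ℕ →. ℕ) (cf cg : CodeO) (n y : ℕ) :
    y ∈ evalP O (.comp cf cg) n ↔ ∃ a ∈ evalP O cg n, y ∈ evalP O cf a := Part.mem_bind_iff

theorem mem_rf (O : ℕ →. ℕ) (cf : CodeO) (n y : ℕ) :
    y ∈ evalP O (.rfind' cf) n ↔ ∃ a, ((∃ b ∈ evalP O cf (Nat.pair n.unpair.1 (a + n.unpair.2)), b = 0) ∧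
      ∀ m < a, ∃ b ∈ evalP O cf (Nat.pair n.unpair.1 (m + n.unpair.2)), b ≠ 0) ∧ a + n.unpair.2 = y := by
  have e : evalP O (.rfind' cf) n = (Nat.rfind fun k => ((evalP O cf (Nat.pair n.unpair.1 (k + n.unpair.2))).map
    (fun m => decide (m = 0)))).map (· + n.unpair.2) := rfl
  rw [e, Part.mem_map_iff]
  refine exists_congr fun a => and_congr_left fun _ => ?_
  refine (Nat.mem_rfind (p := fun k => ((evalP O cf (Nat.pair n.unpair.1 (k + n.unpair.2))).map
    (fun m => decide (m = 0))))).trans ?_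
  simp [Part.mem_map_iff]

theorem evalP_mono {O O' : ℕ →. ℕ} (h : ∀ n y, y ∈ O n → y ∈ O' n) (c : CodeO) :
    ∀ n y, y ∈ evalP O c n → y ∈ evalP O' c n := by
  induction c with
  | zero => intro n y; exact id
  | succ => intro n y; exact id
  | left => intro n y; exact id
  | right => intro n y; exact id
  | oracle => exact h
  | pair cf cg h1 h2 =>
    intro n y
    simp only [evalP, Seq.seq, Part.map_eq_map, Part.bind_eq_bind, Part.mem_bind_iff, Part.mem_map_iff]
    rintro ⟨_, ⟨a, ha, rfl⟩, b, hb, rfl⟩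
    exact ⟨_, ⟨a, h1 _ _ ha, rfl⟩, b, h2 _ _ hb, rfl⟩
  | comp cf cg h1 h2 =>
    intro n y
    simp only [mem_comp]
    rintro ⟨a, ha, hb⟩
    exact ⟨a, h2 _ _ ha, h1 _ _ hb⟩
  | prec cf cg h1 h2 =>
    intro n y
    simp only [evalP, Nat.unpaired]
    generalize n.unpair.1 = a
    generalize n.unpair.2 = k
    induction k generalizing y with
    | zero => exact h1 _ _
    | succ k ih =>
      simp only [Part.bind_eq_bind, Part.mem_bind_iff]
      rintro ⟨i, hi, hb⟩
      exact ⟨i, ih _ hi, h2 _ _ hb⟩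
  | rfind' cf h1 =>
    intro n y
    simp only [mem_rf]
    rintro ⟨a, ⟨⟨b, hb, hb'⟩, hlt⟩, rfl⟩
    refine ⟨a, ⟨⟨b, h1 _ _ hb, hb'⟩, fun m hm => ?_⟩, rfl⟩
    obtain ⟨d, hd, hd'⟩ := hlt m hm
    exact ⟨d, h1 _ _ hd, hd'⟩

theorem lor_mono (O : ℕ → ℕ) {l l' : ℕ} (h : l ≤ l') (n y : ℕ) (hy : y ∈ lor (seg O l) n) :
    y ∈ lor (seg O l') n := by
  rw [mem_lor_seg] at *
  omega

theorem evalP_seg_mono (O : ℕ → ℕ) (c : CodeO) {l l' : ℕ} (h : l ≤ l') {n y : ℕ}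
    (hy : y ∈ evalP (lor (seg O l)) c n) : y ∈ evalP (lor (seg O l')) c n :=
  evalP_mono (lor_mono O h) c n y hy

theorem evalP_cont (O : ℕ → ℕ) (c : CodeO) :
    ∀ n y, y ∈ c.eval O n → ∃ l, y ∈ evalP (lor (seg O l)) c n := by
  induction c with
  | zero => intro n y h; exact ⟨0, h⟩
  | succ => intro n y h; exact ⟨0, h⟩
  | left => intro n y h; exact ⟨0, h⟩
  | right => intro n y h; exact ⟨0, h⟩
  | oracle =>
    intro n y h
    refine ⟨n+1, ?_⟩
    simp only [evalP, mem_lor_seg]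
    simp only [CodeO.eval, PFun.coe_val, Part.mem_some_iff] at h
    exact ⟨by omega, h⟩
  | pair cf cg h1 h2 =>
    intro n y
    simp only [evalP, CodeO.eval, Seq.seq, Part.map_eq_map, Part.bind_eq_bind, Part.mem_bind_iff, Part.mem_map_iff]
    rintro ⟨_, ⟨a, ha, rfl⟩, b, hb, rfl⟩
    obtain ⟨l1, ha⟩ := h1 _ _ ha
    obtain ⟨l2, hb⟩ := h2 _ _ hb
    exact ⟨max l1 l2, _, ⟨a, evalP_seg_mono O cf (le_max_left _ _) ha, rfl⟩, b,
      evalP_seg_mono O cg (le_max_right _ _) hb, rfl⟩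
  | comp cf cg h1 h2 =>
    intro n y
    simp only [← evalP_coe, mem_comp] at *
    rintro ⟨a, ha, hb⟩
    obtain ⟨l1, ha⟩ := h2 _ _ ha
    obtain ⟨l2, hb⟩ := h1 _ _ hb
    exact ⟨max l1 l2, a, evalP_seg_mono O cg (le_max_left _ _) ha,
      evalP_seg_mono O cf (le_max_right _ _) hb⟩
  | prec cf cg h1 h2 =>
    intro n y
    simp only [evalP, CodeO.eval, Nat.unpaired]
    generalize n.unpair.1 = a
    generalize n.unpair.2 = k
    have key : ∀ l l', l ≤ l' → ∀ k y, y ∈ (Nat.rec (evalP (lor (seg O l)) cf a) (fun y IH => do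
        let i ← IH
        evalP (lor (seg O l)) cg (Nat.pair a (Nat.pair y i))) k : Part ℕ) →
        y ∈ (Nat.rec (evalP (lor (seg O l')) cf a) (fun y IH => do
        let i ← IH
        evalP (lor (seg O l')) cg (Nat.pair a (Nat.pair y i))) k : Part ℕ) := by
      intro l l' hl k
      induction k with
      | zero => intro y; exact evalP_seg_mono O cf hl
      | succ k ih =>
        intro y
        simp only [Part.bind_eq_bind, Part.mem_bind_iff]
        rintro ⟨i, hi, hb⟩
        exact ⟨i, ih _ hi, evalP_seg_mono O cg hl hb⟩
    induction k generalizing y with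
    | zero => exact h1 _ _
    | succ k ih =>
      simp only [Part.bind_eq_bind, Part.mem_bind_iff] at *
      rintro ⟨i, hi, hb⟩
      obtain ⟨l1, hi⟩ := ih _ hi
      obtain ⟨l2, hb⟩ := h2 _ _ hb
      exact ⟨max l1 l2, i, key _ _ (le_max_left _ _) _ _ hi,
        evalP_seg_mono O cg (le_max_right _ _) hb⟩
  | rfind' cf h1 =>
    intro n y
    simp only [← evalP_coe, mem_rf] at *
    rintro ⟨a, ⟨⟨b, hb, hb'⟩, hlt⟩, rfl⟩
    obtain ⟨l0, hb⟩ := h1 _ _ hb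
    have : ∀ k ≤ a, ∃ l, ∀ m < k, ∃ d, d ∈ evalP (lor (seg O l)) cf (Nat.pair n.unpair.1 (m + n.unpair.2)) ∧
        d ≠ 0 := by
      intro k
      induction k with
      | zero => exact fun _ => ⟨0, by simp⟩
      | succ k ih =>
        intro hk
        obtain ⟨l1, hl1⟩ := ih (by omega)
        obtain ⟨d, hd, hd'⟩ := hlt k (by omega)
        obtain ⟨l2, hd⟩ := h1 _ _ hd
        refine ⟨max l1 l2, fun m hm => ?_⟩
        rcases Nat.lt_succ_iff_lt_or_eq.mp hm with h | rfl
        · obtain ⟨e, he, he'⟩ := hl1 m h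
          exact ⟨e, evalP_seg_mono O cf (le_max_left _ _) he, he'⟩
        · exact ⟨d, evalP_seg_mono O cf (le_max_right _ _) hd, hd'⟩
    obtain ⟨l1, hl1⟩ := this a le_rfl
    refine ⟨max l0 l1, a, ⟨⟨b, evalP_seg_mono O cf (le_max_left _ _) hb, hb'⟩, fun m hm => ?_⟩, rfl⟩
    obtain ⟨d, hd, hd'⟩ := hl1 m hm
    exact ⟨d, evalP_seg_mono O cf (le_max_right _ _) hd, hd'⟩

theorem evalP_dom_iff (O : ℕ → ℕ) (c : CodeO) (n : ℕ) :
    (c.eval O n).Dom ↔ ∃ l, (evalP (lor (seg O l)) c n).Dom := by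
  constructor
  · intro h
    obtain ⟨l, hl⟩ := evalP_cont O c n _ (Part.get_mem h)
    exact ⟨l, Part.dom_iff_mem.mpr ⟨_, hl⟩⟩
  · rintro ⟨l, hl⟩
    have := evalP_mono (O' := (↑O : ℕ →. ℕ)) (O := lor (seg O l)) (fun n y hy => by
      rw [mem_lor_seg] at hy; simp [hy.2]) c n _ (Part.get_mem hl)
    rw [evalP_coe] at this
    exact Part.dom_iff_mem.mpr ⟨_, this⟩

theorem partrec_rf_aux {f : List ℕ × ℕ →. ℕ} (h1 : Partrec f) :
    Partrec₂ (fun (p : List ℕ × ℕ) (n : ℕ) =>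
        (f (p.1, (Nat.pair p.2.unpair.1 (n + p.2.unpair.2)))).map (fun m => decide (m = 0))) := by
  have hg : Computable (fun q : (List ℕ × ℕ) × ℕ =>
      (q.1.1, Nat.pair q.1.2.unpair.1 (q.2 + q.1.2.unpair.2))) := by
    refine Primrec.to_comp ?_
    exact (Primrec.fst.comp Primrec.fst).pair (Primrec₂.natPair.comp
      (Primrec.fst.comp (Primrec.unpair.comp (Primrec.snd.comp Primrec.fst)))
      (Primrec.nat_add.comp Primrec.snd
        (Primrec.snd.comp (Primrec.unpair.comp (Primrec.snd.comp Primrec.fst)))))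
  have h2 : Partrec (fun q : (List ℕ × ℕ) × ℕ =>
      f (q.1.1, Nat.pair q.1.2.unpair.1 (q.2 + q.1.2.unpair.2))) := h1.comp hg
  have h3 : Computable₂ (fun (_ : (List ℕ × ℕ) × ℕ) (m : ℕ) => decide (m = 0)) :=
    (Primrec.eq.decide.comp Primrec.snd (Primrec.const 0)).to_comp
  exact (h2.map h3).to₂

theorem evalP_partrec (c : CodeO) : Partrec fun p : List ℕ × ℕ => evalP (lor p.1) c p.2 := by
  induction c with
  | zero => exact (Computable.const 0).partrec
  | succ => exact (Computable.succ.comp Computable.snd).partrec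
  | left => exact (Computable.fst.comp (Computable.unpair.comp Computable.snd)).partrec
  | right => exact (Computable.snd.comp (Computable.unpair.comp Computable.snd)).partrec
  | oracle => exact (Computable.list_getElem?.comp Computable.fst Computable.snd).ofOption
  | pair cf cg h1 h2 =>
    refine (Partrec.bind h1 (Partrec.map (h2.comp Computable.fst) (g := fun q b => Nat.pair q.2 b)
      ?_).to₂).of_eq ?_
    · exact (Primrec₂.natPair.comp (Primrec.snd.comp Primrec.fst) Primrec.snd).to_comp
    · intro p
      simp [evalP, Seq.seq, Part.bind_map]
  | comp cf cg h1 h2 =>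
    exact Partrec.bind h2 (h1.comp ((Computable.fst.comp Computable.fst).pair Computable.snd)).to₂
  | prec cf cg h1 h2 =>
    refine (Partrec.nat_rec (f := fun p : List ℕ × ℕ => p.2.unpair.2)
      (g := fun p : List ℕ × ℕ => evalP (lor p.1) cf p.2.unpair.1)
      (h := fun p q => evalP (lor p.1) cg (Nat.pair p.2.unpair.1 (Nat.pair q.1 q.2))) ?_ ?_ ?_)
    · exact (Computable.snd.comp (Computable.unpair.comp Computable.snd))
    · exact h1.comp (Computable.fst.pair (Computable.fst.comp (Computable.unpair.comp Computable.snd)))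
    · refine Partrec.comp h2 (g := fun q : (List ℕ × ℕ) × (ℕ × ℕ) => (q.1.1, Nat.pair q.1.2.unpair.1 (Nat.pair q.2.1 q.2.2))) ?_
      refine Primrec.to_comp ?_
      exact (Primrec.fst.comp Primrec.fst).pair (Primrec₂.natPair.comp
        (Primrec.fst.comp (Primrec.unpair.comp (Primrec.snd.comp Primrec.fst)))
        (Primrec₂.natPair.comp (Primrec.fst.comp Primrec.snd) (Primrec.snd.comp Primrec.snd)))
  | rfind' cf h1 =>
    have h4 : Computable₂ (fun (p : List ℕ × ℕ) (n : ℕ) => n + p.2.unpair.2) :=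
      (Primrec.nat_add.comp Primrec.snd
            (Primrec.snd.comp (Primrec.unpair.comp (Primrec.snd.comp Primrec.fst)))).to_comp
    exact Partrec.map (Partrec.rfind (partrec_rf_aux h1)) h4

end RandProb

namespace RandProb

/-- Translation of Mathlib codes to oracle codes. -/
def tr : Nat.Partrec.Code → CodeO
  | .zero => .zero
  | .succ => .succ
  | .left => .left
  | .right => .right
  | .pair a b => .pair (tr a) (tr b)
  | .comp a b => .comp (tr a) (tr b)
  | .prec a b => .prec (tr a) (tr b)
  | .rfind' a => .rfind' (tr a)

theorem tr_eval (O : ℕ → ℕ) (c : Nat.Partrec.Code) : (tr c).eval O = c.eval := by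
  induction c with
  | zero => rfl
  | succ => rfl
  | left => rfl
  | right => rfl
  | pair a b h1 h2 => simp only [tr, CodeO.eval, Nat.Partrec.Code.eval, h1, h2]; rfl
  | comp a b h1 h2 => simp only [tr, CodeO.eval, Nat.Partrec.Code.eval, h1, h2]; rfl
  | prec a b h1 h2 => simp only [tr, CodeO.eval, Nat.Partrec.Code.eval, h1, h2]; rfl
  | rfind' a h1 =>
    simp only [tr, CodeO.eval, Nat.Partrec.Code.eval, h1]
    congr! 9

theorem eval_comp_some {O : ℕ → ℕ} {cf cg : CodeO} {n a : ℕ} (h : cg.eval O n = Part.some a) :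
    (CodeO.comp cf cg).eval O n = cf.eval O a := by
  have : (CodeO.comp cf cg).eval O n = (cg.eval O n).bind (fun a => cf.eval O a) := rfl
  rw [this, h, Part.bind_some]

theorem eval_pair_some {O : ℕ → ℕ} {cf cg : CodeO} {n a b : ℕ} (h : cf.eval O n = Part.some a)
    (h' : cg.eval O n = Part.some b) :
    (CodeO.pair cf cg).eval O n = Part.some (Nat.pair a b) := by
  have : (CodeO.pair cf cg).eval O n = (cf.eval O n).map Nat.pair <*> (cg.eval O n) := rfl
  rw [this, h, h']
  simp [Seq.seq]

theorem eval_left (O : ℕ → ℕ) (a b : ℕ) : CodeO.left.eval O (Nat.pair a b) = Part.some a := by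
  simp [CodeO.eval]

theorem eval_right (O : ℕ → ℕ) (a b : ℕ) : CodeO.right.eval O (Nat.pair a b) = Part.some b := by
  simp [CodeO.eval]

theorem eval_prec_zero (O : ℕ → ℕ) (cf cg : CodeO) (a : ℕ) :
    (CodeO.prec cf cg).eval O (Nat.pair a 0) = cf.eval O a := by
  simp [CodeO.eval, Nat.unpaired]

theorem eval_prec_succ (O : ℕ → ℕ) (cf cg : CodeO) (a l : ℕ) :
    (CodeO.prec cf cg).eval O (Nat.pair a (l+1)) =
      ((CodeO.prec cf cg).eval O (Nat.pair a l)).bind fun i => cg.eval O (Nat.pair a (Nat.pair l i)) := by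
  simp only [CodeO.eval, Nat.unpaired, Nat.unpair_pair]
  rfl

theorem code_of_computable (O : ℕ → ℕ) {f : ℕ → ℕ} (hf : Computable f) :
    ∃ c : CodeO, ∀ n, c.eval O n = Part.some (f n) := by
  obtain ⟨c, hc⟩ := Nat.Partrec.Code.exists_code.mp (Partrec.nat_iff.mp hf.partrec)
  exact ⟨tr c, fun n => by rw [tr_eval, hc]; rfl⟩

/-- Normal form for sets c.e. in an oracle. -/
theorem CeIn.normal {O : ℕ → ℕ} {A : Set ℕ} (h : CeIn O A) :
    ∃ D : ℕ → List ℕ → Bool, Primrec₂ D ∧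
      (∀ m l l', l ≤ l' → D m (seg O l) = true → D m (seg O l') = true) ∧
      ∀ m, m ∈ A ↔ ∃ l, D m (seg O l) = true := by
  obtain ⟨c, rfl⟩ := h
  obtain ⟨k, hk⟩ := Nat.Partrec.Code.exists_code.mp (evalP_partrec c)
  have hk' : ∀ (L : List ℕ) (m : ℕ), (k.eval (Encodable.encode (L, m))).Dom ↔
      (evalP (lor L) c m).Dom := by
    intro L m
    rw [hk]
    simp only [Encodable.encodek]
    simp [Part.bind_dom]
  have hP : PrimrecRel fun (m : ℕ) (L : List ℕ) => ∃ i < L.length + 1,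
      (Nat.Partrec.Code.evaln L.length k (Encodable.encode (L.take i, m))).isSome = true := by
    have h1 : PrimrecRel fun (i : ℕ) (q : ℕ × List ℕ) =>
        (Nat.Partrec.Code.evaln q.2.length k (Encodable.encode (q.2.take i, q.1))).isSome = true := by
      refine Primrec.primrecPred ?_
      have h2 : Primrec fun (p : ℕ × (ℕ × List ℕ)) => Encodable.encode (p.2.2.take p.1, p.2.1) :=
        Primrec.encode.comp ((Primrec.list_take.comp Primrec.fst (Primrec.snd.comp Primrec.snd)).pair
          (Primrec.fst.comp Primrec.snd))
      have h3 : Primrec fun (p : ℕ × (ℕ × List ℕ)) => p.2.2.length :=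
        Primrec.list_length.comp (Primrec.snd.comp Primrec.snd)
      have h4 := Nat.Partrec.Code.primrec_evaln.comp ((h3.pair (Primrec.const k)).pair h2)
      exact (Primrec.option_isSome.comp h4).of_eq (fun p => by rw [Bool.eq_iff_iff, decide_eq_true_iff])
    have h5 := PrimrecRel.exists_mem_list h1
    exact (h5.comp (Primrec.list_range.comp (Primrec.succ.comp (Primrec.list_length.comp Primrec.snd))) (Primrec.id)).of_eq
      (fun p => by simp)
  refine ⟨fun m L => decide (∃ i < L.length + 1,
      (Nat.Partrec.Code.evaln L.length k (Encodable.encode (L.take i, m))).isSome = true), ?_, ?_, ?_⟩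
  · obtain ⟨_, h⟩ := hP
    exact h.of_eq fun p => by congr
  · intro m l l' hl
    simp only [decide_eq_true_eq, seg_length]
    rintro ⟨i, hi, h⟩
    refine ⟨i, by omega, ?_⟩
    rw [seg_take _ _ _ (by omega)] at h ⊢
    rw [Option.isSome_iff_exists] at h ⊢
    obtain ⟨a, ha⟩ := h
    exact ⟨a, Nat.Partrec.Code.evaln_mono hl ha⟩
  · intro m
    simp only [decide_eq_true_eq, seg_length, Set.mem_ofPred_eq]
    rw [evalP_dom_iff]
    constructor
    · rintro ⟨i, hi⟩
      rw [← hk', Part.dom_iff_mem] at hi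
      obtain ⟨y, hy⟩ := hi
      obtain ⟨s, hs⟩ := Nat.Partrec.Code.evaln_complete.mp hy
      refine ⟨max i s, i, by omega, ?_⟩
      rw [seg_take _ _ _ (by omega), Option.isSome_iff_exists]
      exact ⟨y, Nat.Partrec.Code.evaln_mono (le_max_right _ _) hs⟩
    · rintro ⟨l, i, hi, h⟩
      rw [seg_take _ _ _ (by omega), Option.isSome_iff_exists] at h
      obtain ⟨y, hy⟩ := h
      refine ⟨i, ?_⟩
      rw [← hk', Part.dom_iff_mem]
      exact ⟨y, Nat.Partrec.Code.evaln_sound hy⟩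

theorem seg_code (O : ℕ → ℕ) : ∃ c : CodeO, ∀ a l, c.eval O (Nat.pair a l) =
    Part.some (Encodable.encode (seg O l)) := by
  have h1 : Computable (fun p : ℕ => Encodable.encode
      (((Encodable.decode (α := List ℕ) p.unpair.2).getD []) ++ [p.unpair.1])) := by
    refine Primrec.to_comp ?_
    refine Primrec.encode.comp ?_
    refine Primrec.list_append.comp ?_ ?_
    · exact Primrec.option_getD.comp (Primrec.decode.comp (Primrec.snd.comp Primrec.unpair))
        (Primrec.const [])
    · exact Primrec.list_cons.comp (Primrec.fst.comp Primrec.unpair) (Primrec.const [])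
  obtain ⟨c1, hc1⟩ := code_of_computable O h1
  obtain ⟨c0, hc0⟩ := code_of_computable O (Computable.const (Encodable.encode ([] : List ℕ)))
  refine ⟨.prec c0 (.comp c1 (.pair (.comp .oracle (.comp .left .right)) (.comp .right .right))), ?_⟩
  intro a l
  have hs : ∀ l i, (CodeO.comp c1 (.pair (.comp .oracle (.comp .left .right)) (.comp .right .right))).eval O
      (Nat.pair a (Nat.pair l i)) = Part.some (Encodable.encode
      (((Encodable.decode (α := List ℕ) i).getD []) ++ [O l])) := by
    intro l i
    have e1 : (CodeO.comp .left .right).eval O (Nat.pair a (Nat.pair l i)) = Part.some l := by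
      rw [eval_comp_some (eval_right _ _ _), eval_left]
    have e2 : (CodeO.comp .right .right).eval O (Nat.pair a (Nat.pair l i)) = Part.some i := by
      rw [eval_comp_some (eval_right _ _ _), eval_right]
    rw [eval_comp_some (eval_pair_some (a := O l) (by rw [eval_comp_some e1]; rfl) e2), hc1]
    simp
  induction l with
  | zero => rw [eval_prec_zero, hc0]; rfl
  | succ l ih =>
    rw [eval_prec_succ, ih, Part.bind_some, hs, Encodable.encodek, seg_succ]
    rfl

theorem CeIn.of_computable {O : ℕ → ℕ} {D : ℕ → List ℕ → Bool} (hD : Computable₂ D) :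
    CeIn O {m | ∃ l, D m (seg O l) = true} := by
  have h1 : Computable (fun p : ℕ => cond (D p.unpair.1
      ((Encodable.decode (α := List ℕ) p.unpair.2).getD [])) 0 1) := by
    refine Computable.cond ?_ (Computable.const 0) (Computable.const 1)
    refine hD.comp (Computable.fst.comp Computable.unpair) ?_
    exact (Primrec.option_getD.comp (Primrec.decode.comp (Primrec.snd.comp Primrec.unpair))
        (Primrec.const [])).to_comp
  obtain ⟨c1, hc1⟩ := code_of_computable O h1
  obtain ⟨cs, hcs⟩ := seg_code O
  obtain ⟨cp, hcp⟩ := code_of_computable O (f := fun m => Nat.pair m 0)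
    (Primrec₂.natPair.comp Primrec.id (Primrec.const 0)).to_comp
  refine ⟨.comp (.rfind' (.comp c1 (.pair .left cs))) cp, ?_⟩
  ext m
  have hq : ∀ l, (CodeO.comp c1 (.pair .left cs)).eval O (Nat.pair m l) =
      Part.some (cond (D m (seg O l)) 0 1) := by
    intro l
    rw [eval_comp_some (eval_pair_some (eval_left _ _ _) (hcs _ _)), hc1]
    simp
  have hm : ∀ y, y ∈ (CodeO.comp (.rfind' (.comp c1 (.pair .left cs))) cp).eval O m ↔
      ∃ a, (D m (seg O a) = true ∧ ∀ b < a, D m (seg O b) = false) ∧ a = y := by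
    intro y
    rw [eval_comp_some (hcp m), ← evalP_coe, mem_rf]
    simp only [evalP_coe, hcp, Part.mem_some_iff, exists_eq_left, Nat.unpair_pair, Nat.add_zero, hq]
    refine exists_congr fun a => and_congr_left fun _ => ?_
    refine and_congr ?_ (forall₂_congr fun b _ => ?_)
    · cases D m (seg O a) <;> simp
    · cases D m (seg O b) <;> simp
  simp only [Set.mem_ofPred_eq]
  rw [Part.dom_iff_mem]
  simp only [hm]
  constructor
  · intro h
    exact ⟨_, _, ⟨Nat.find_spec h, fun b hb => by simpa using Nat.find_min h hb⟩, rfl⟩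
  · rintro ⟨_, a, ⟨h, _⟩, _⟩
    exact ⟨a, h⟩

theorem CeIn.of_stage {O : ℕ → ℕ} {T : ℕ → List ℕ → Bool} (hT : Computable₂ T)
    {t : ℕ → ℕ} (ht : Computable t) : CeIn O {m | T m (seg O (t m)) = true} := by
  have h := CeIn.of_computable (O := O) (D := fun m L => (decide (L.length = t m)) && T m L) (by
    refine Primrec.and.to_comp.comp (Computable₂.comp Primrec.eq.decide.to_comp (Computable.list_length.comp Computable.snd) (ht.comp Computable.fst)) hT)
  convert h using 3 with m
  constructor
  · intro h; exact ⟨t m, by simpa using h⟩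
  · rintro ⟨l, hl⟩
    simp at hl
    obtain ⟨rfl, h⟩ := hl
    exact h

theorem CeIn.comp {O : ℕ → ℕ} {A : Set ℕ} (h : CeIn O A) {f : ℕ → ℕ} (hf : Computable f) :
    CeIn O {m | f m ∈ A} := by
  obtain ⟨c, rfl⟩ := h
  obtain ⟨cf, hcf⟩ := code_of_computable O hf
  refine ⟨.comp c cf, ?_⟩
  ext m
  simp only [Set.mem_ofPred_eq]
  rw [eval_comp_some (hcf m)]

theorem CeIn.inter {O : ℕ → ℕ} {A B : Set ℕ} (hA : CeIn O A) (hB : CeIn O B) :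
    CeIn O {m | m ∈ A ∧ m ∈ B} := by
  obtain ⟨c, rfl⟩ := hA
  obtain ⟨d, rfl⟩ := hB
  refine ⟨.pair c d, ?_⟩
  ext m
  simp [CodeO.eval, Seq.seq, Part.bind_dom]

theorem CeIn.ex {O : ℕ → ℕ} {A : Set ℕ} (hA : CeIn O A) :
    CeIn O {m | ∃ k, Nat.pair m k ∈ A} := by
  obtain ⟨D, hD, hmono, hA⟩ := hA.normal
  have hP : PrimrecRel fun (m : ℕ) (L : List ℕ) => ∃ i < L.length + 1, D (Nat.pair m i) L = true := by
    have h1 : PrimrecRel fun (i : ℕ) (q : ℕ × List ℕ) => D (Nat.pair q.1 i) q.2 = true := by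
      refine Primrec.primrecPred ?_
      exact (hD.comp (Primrec₂.natPair.comp (Primrec.fst.comp Primrec.snd) Primrec.fst)
        (Primrec.snd.comp Primrec.snd)).of_eq (fun p => by rw [Bool.eq_iff_iff, decide_eq_true_iff])
    have h5 := PrimrecRel.exists_mem_list h1
    exact (h5.comp (Primrec.list_range.comp (Primrec.succ.comp (Primrec.list_length.comp Primrec.snd))) (Primrec.id)).of_eq
      (fun p => by simp)
  have := CeIn.of_computable (O := O) (D := fun m L => decide (∃ i < L.length + 1, D (Nat.pair m i) L = true)) (by
    obtain ⟨_, h⟩ := hP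
    exact (h.of_eq fun p => by congr).to_comp)
  convert this using 3 with m
  simp only [hA, decide_eq_true_eq, seg_length]
  constructor
  · rintro ⟨k, l, h⟩
    exact ⟨max k l, k, by omega, hmono _ _ _ (le_max_right _ _) h⟩
  · rintro ⟨l, k, _, h⟩
    exact ⟨k, l, h⟩

theorem encode_inj : ∀ c d : CodeO, c.encode = d.encode → c = d := by
  intro c
  induction c with
  | zero => intro d; cases d <;> simp [CodeO.encode]
  | succ => intro d; cases d <;> simp [CodeO.encode]
  | left => intro d; cases d <;> simp [CodeO.encode] <;> omega
  | right => intro d; cases d <;> simp [CodeO.encode] <;> omega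
  | oracle => intro d; cases d <;> simp [CodeO.encode] <;> omega
  | pair a b h1 h2 =>
    intro d; cases d <;> simp only [CodeO.encode] <;> intro h <;> try omega
    simp only [Nat.add_right_cancel_iff, Nat.mul_left_cancel_iff (show 0 < 2 by norm_num), Nat.pair_eq_pair] at h
    rw [h1 _ h.1, h2 _ h.2]
  | comp a b h1 h2 =>
    intro d; cases d <;> simp only [CodeO.encode] <;> intro h <;> try omega
    simp only [Nat.add_right_cancel_iff, Nat.mul_left_cancel_iff (show 0 < 2 by norm_num), Nat.pair_eq_pair] at h
    rw [h1 _ h.1, h2 _ h.2]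
  | prec a b h1 h2 =>
    intro d; cases d <;> simp only [CodeO.encode] <;> intro h <;> try omega
    simp only [Nat.add_right_cancel_iff, Nat.mul_left_cancel_iff (show 0 < 2 by norm_num), Nat.pair_eq_pair] at h
    rw [h1 _ h.1, h2 _ h.2]
  | rfind' a h1 =>
    intro d; cases d <;> simp only [CodeO.encode] <;> intro h <;> try omega
    simp only [Nat.add_right_cancel_iff, Nat.mul_left_cancel_iff (show 0 < 2 by norm_num)] at h
    rw [h1 _ h]

/-- Code of a constant function. -/
def cst : ℕ → CodeO
  | 0 => .zero
  | n+1 => .comp .succ (cst n)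

theorem cst_eval (O : ℕ → ℕ) (m n : ℕ) : (cst m).eval O n = Part.some m := by
  induction m with
  | zero => rfl
  | succ m ih => rw [cst, eval_comp_some ih]; rfl

theorem CeIn.compl_jump {O : ℕ → ℕ} {A : Set ℕ} (hA : CeIn O A) : CeIn (jump O) {m | m ∉ A} := by
  obtain ⟨c, rfl⟩ := hA
  have hf : Primrec fun m => (CodeO.comp c (cst m)).encode := by
    have h1 : Primrec fun m => (cst m).encode := by
      have := Primrec.nat_rec₁ (α := ℕ) (f := fun _ e => 2 * (2 * Nat.pair 1 e + 1) + 5) 0 (by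
        refine Primrec.nat_add.comp (Primrec.nat_mul.comp (Primrec.const 2) (Primrec.nat_add.comp
          (Primrec.nat_mul.comp (Primrec.const 2) (Primrec₂.natPair.comp (Primrec.const 1) Primrec.snd))
          (Primrec.const 1))) (Primrec.const 5))
      refine this.of_eq fun m => ?_
      induction m with
      | zero => rfl
      | succ m ih => simp only [cst, CodeO.encode]; rw [← ih]
    exact Primrec.nat_add.comp (Primrec.nat_mul.comp (Primrec.const 2) (Primrec.nat_add.comp
          (Primrec.nat_mul.comp (Primrec.const 2) (Primrec₂.natPair.comp (Primrec.const c.encode) h1))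
          (Primrec.const 1))) (Primrec.const 5)
  have hj : ∀ m, jump O (CodeO.comp c (cst m)).encode = 0 ↔ ¬ (c.eval O m).Dom := by
    intro m
    have : (∃ d : CodeO, d.encode = (CodeO.comp c (cst m)).encode ∧ (d.eval O (CodeO.comp c (cst m)).encode).Dom) ↔
        (c.eval O m).Dom := by
      constructor
      · rintro ⟨d, hd, h⟩
        rw [encode_inj _ _ hd] at h
        rwa [eval_comp_some (cst_eval _ _ _)] at h
      · intro h
        exact ⟨_, rfl, by rwa [eval_comp_some (cst_eval _ _ _)]⟩
    simp only [jump, this]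
    simp
  have := CeIn.of_computable (O := jump O)
    (D := fun m L => decide (L[(CodeO.comp c (cst m)).encode]? = some 0)) (by
      refine Primrec.to_comp (α := ℕ × List ℕ) ?_
      exact Primrec.eq.decide.comp (Primrec.list_getElem?.comp Primrec.snd (hf.comp Primrec.fst)) (Primrec.const (some 0)))
  convert this using 3 with m
  simp only [Set.mem_ofPred_eq, decide_eq_true_eq, seg_get]
  rw [← hj]
  constructor
  · intro h
    exact ⟨(CodeO.comp c (cst m)).encode + 1, by simp [h]⟩
  · rintro ⟨l, hl⟩
    split_ifs at hl
    simpa using hl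

theorem sigma_ceIn (n : ℕ) (c : CodeO) : CeIn (iterJump n) (SigmaNumIdx n c) := by
  induction n with
  | zero => exact ⟨c, rfl⟩
  | succ n ih => exact CeIn.ex (CeIn.compl_jump ih)

end RandProb

namespace RandProb

theorem initSeg_succ (X : Cantor) (n : ℕ) : initSeg X (n+1) = initSeg X n ++ [X n] := by
  simp [initSeg, List.range_succ]

@[simp] theorem initSeg_length (X : Cantor) (n : ℕ) : (initSeg X n).length = n := by
  simp [initSeg]

theorem initSeg_isPre (X : Cantor) {m n : ℕ} (h : m ≤ n) : initSeg X m <+: initSeg X n := by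
  induction n, h using Nat.le_induction with
  | base => exact List.prefix_rfl
  | succ n _ ih => rw [initSeg_succ]; exact ih.trans (List.prefix_append _ _)

/-- Binary value of a string. -/
def val (σ : List Bool) : ℤ := σ.foldl (fun a b => 2 * a + cond b 1 0) 0

theorem val_snoc (σ : List Bool) (b : Bool) : val (σ ++ [b]) = 2 * val σ + cond b 1 0 := by
  simp [val]

theorem val_bounds (σ : List Bool) : 0 ≤ val σ ∧ val σ < 2 ^ σ.length := by
  induction σ using List.reverseRecOn with
  | nil => simp [val]
  | append_singleton σ b ih =>
    rw [val_snoc, List.length_append, List.length_singleton, pow_succ]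
    cases b <;> simp <;> omega

theorem initSeg_digits (x : ℝ) (hx : x ∈ Set.Ico (0:ℝ) 1) (σ : List Bool) :
    initSeg (digits x) σ.length = σ ↔ ⌊x * 2 ^ σ.length⌋ = val σ := by
  induction σ using List.reverseRecOn with
  | nil =>
    simp [val, initSeg]
    exact hx
  | append_singleton σ b ih =>
    have h1 : initSeg (digits x) σ.length ++ [digits x σ.length] = σ ++ [b] ↔
        initSeg (digits x) σ.length = σ ∧ digits x σ.length = b := by
      constructor
      · intro h
        have := List.append_inj h (by simp)
        simpa using this
      · rintro ⟨h, h'⟩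
        rw [h, h']
    rw [val_snoc, List.length_append, List.length_singleton, initSeg_succ, h1, ih]
    have h2 : ⌊x * 2 ^ (σ.length + 1)⌋ = 2 * ⌊x * 2 ^ σ.length⌋ ∨
        ⌊x * 2 ^ (σ.length + 1)⌋ = 2 * ⌊x * 2 ^ σ.length⌋ + 1 := by
      have e : x * 2 ^ (σ.length + 1) = 2 * (x * 2 ^ σ.length) := by ring
      rw [e]
      have a1 := Int.floor_le (x * 2 ^ σ.length)
      have a2 := Int.lt_floor_add_one (x * 2 ^ σ.length)
      have b1 : 2 * ⌊x * 2 ^ σ.length⌋ ≤ ⌊2 * (x * 2 ^ σ.length)⌋ := by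
        rw [Int.le_floor]; push_cast; linarith
      have b2 : ⌊2 * (x * 2 ^ σ.length)⌋ < 2 * ⌊x * 2 ^ σ.length⌋ + 2 := by
        rw [Int.floor_lt]; push_cast; linarith
      omega
    simp only [digits]
    cases b <;> simp <;> omega

theorem measurable_digits : Measurable digits := by
  rw [measurable_pi_iff]
  intro n
  have h : Measurable (fun x : ℝ => ⌊x * 2 ^ (n+1)⌋) :=
    Int.measurable_floor.comp (measurable_id.mul_const _)
  exact (measurable_from_top (f := fun z : ℤ => decide (z % 2 = 1))).comp h

/-- The basic cylinder. -/
def cyl1 (σ : List Bool) : Set Cantor := {X | initSeg X σ.length = σ}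

theorem measurableSet_cyl1 (σ : List Bool) : MeasurableSet (cyl1 σ) := by
  induction σ using List.reverseRecOn with
  | nil => simp [cyl1, initSeg]
  | append_singleton σ b ih =>
    have : cyl1 (σ ++ [b]) = cyl1 σ ∩ {X | X σ.length = b} := by
      ext X
      simp only [cyl1, Set.mem_ofPred_eq, Set.mem_inter_iff, List.length_append, List.length_singleton,
        initSeg_succ]
      constructor
      · intro h
        have := List.append_inj h (by simp)
        simpa using this
      · rintro ⟨h, h'⟩
        rw [h, h']
    rw [this]
    have hm : Measurable (fun X : Cantor => X σ.length) := measurable_pi_apply _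
    exact ih.inter (hm (MeasurableSet.of_discrete (s := {b})))

theorem mu_cyl1 (σ : List Bool) : mu (cyl1 σ) = ENNReal.ofReal ((2:ℝ)⁻¹ ^ σ.length) := by
  rw [mu, Measure.map_apply measurable_digits (measurableSet_cyl1 σ),
    Measure.restrict_apply (measurable_digits (measurableSet_cyl1 σ))]
  have hv := val_bounds σ
  have hp : (0:ℝ) < 2 ^ σ.length := by positivity
  have h1 : (0:ℝ) ≤ val σ := by exact_mod_cast hv.1
  have h2 : (val σ:ℝ) + 1 ≤ 2 ^ σ.length := by exact_mod_cast hv.2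
  have : digits ⁻¹' cyl1 σ ∩ Set.Ico 0 1 =
      Set.Ico ((val σ : ℝ) / 2 ^ σ.length) (((val σ : ℝ) + 1) / 2 ^ σ.length) := by
    ext x
    constructor
    · rintro ⟨h, hx⟩
      have := (initSeg_digits x hx σ).mp h
      rw [Int.floor_eq_iff] at this
      exact ⟨by rw [div_le_iff₀ hp]; exact this.1, by rw [lt_div_iff₀ hp]; exact this.2⟩
    · rintro ⟨h, h'⟩
      have hx : x ∈ Set.Ico (0:ℝ) 1 :=
        ⟨le_trans (by positivity) h, lt_of_lt_of_le h' (by rw [div_le_one hp]; exact h2)⟩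
      refine ⟨(initSeg_digits x hx σ).mpr ?_, hx⟩
      rw [Int.floor_eq_iff]
      exact ⟨by rw [div_le_iff₀ hp] at h; exact h, by rw [lt_div_iff₀ hp] at h'; exact h'⟩
  rw [this, Real.volume_Ico]
  congr 1
  rw [← sub_div, inv_pow]
  simp

/-- Length of the string with a given code. -/
def len (x : ℕ) : ℕ := min ((Encodable.decode (α := List Bool) x).getD []).length x

theorem length_le_encode (l : List Bool) : l.length ≤ Encodable.encode l := by
  induction l with
  | nil => simp
  | cons a l ih =>
    rw [Encodable.encode_list_cons, List.length_cons]
    have := Nat.right_le_pair (Encodable.encode a) (Encodable.encode l)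
    omega

theorem len_encode (l : List Bool) : len (Encodable.encode l) = l.length := by
  simp [len, length_le_encode]

theorem len_le (x : ℕ) : len x ≤ x := min_le_right _ _

theorem primrec_len : Primrec len :=
  Primrec.nat_min.comp (Primrec.list_length.comp
    (Primrec.option_getD.comp Primrec.decode (Primrec.const []))) Primrec.id

/-- Weight of the string with a given code. -/
noncomputable def wt (x : ℕ) : ℝ := (2:ℝ)⁻¹ ^ len x

theorem wt_pos (x : ℕ) : 0 < wt x := by unfold wt; positivity

theorem hasSum_cyl {V : Set (List Bool)} (hV : IsPrefixFree V) :
    HasSum (Set.indicator (strCodes V) wt) (muR (cyl V)) := by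
  have h1 : cyl V = ⋃ σ : V, cyl1 σ := by
    ext X
    simp only [cyl, cyl1, Set.mem_ofPred_eq, Set.mem_iUnion]
    constructor
    · rintro ⟨n, hn⟩
      exact ⟨⟨_, hn⟩, by simp⟩
    · rintro ⟨⟨σ, hσ⟩, h⟩
      exact ⟨σ.length, by rw [h]; exact hσ⟩
  have h2 : mu (cyl V) = ∑' σ : V, ENNReal.ofReal ((2:ℝ)⁻¹ ^ (σ:List Bool).length) := by
    rw [h1, measure_iUnion]
    · simp_rw [mu_cyl1]
    · rintro ⟨σ, hσ⟩ ⟨τ, hτ⟩ hne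
      rw [Function.onFun, Set.disjoint_left]
      intro X h h'
      apply hne
      simp only [cyl1, Set.mem_ofPred_eq] at h h'
      rcases le_total σ.length τ.length with hl | hl
      · have := initSeg_isPre X hl
        rw [h, h'] at this
        exact Subtype.ext (hV σ hσ τ hτ this)
      · have := initSeg_isPre X hl
        rw [h, h'] at this
        exact Subtype.ext (hV τ hτ σ hσ this).symm
    · exact fun σ => measurableSet_cyl1 σ
  have hfin : mu (cyl V) ≠ ⊤ := by
    have : mu (cyl V) ≤ mu Set.univ := measure_mono (Set.subset_univ _)
    refine ne_top_of_le_ne_top ?_ this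
    rw [mu, Measure.map_apply measurable_digits MeasurableSet.univ]
    simp
  have h3 : HasSum (fun σ : V => (2:ℝ)⁻¹ ^ (σ:List Bool).length) (muR (cyl V)) := by
    have := ENNReal.hasSum_toReal (h2 ▸ hfin)
    rw [muR, h2]
    rw [ENNReal.tsum_toReal_eq (fun _ => ENNReal.ofReal_ne_top)]
    convert this using 2 with σ
    rw [ENNReal.toReal_ofReal (by positivity)]
  have hi : Function.Injective (fun σ : V => Encodable.encode (σ : List Bool)) :=
    fun a b h => Subtype.ext (Encodable.encode_injective h)
  rw [← hi.hasSum_iff]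
  · convert h3 using 2 with σ
    simp only [Function.comp]
    rw [Set.indicator_of_mem (show _ ∈ strCodes V from ⟨_, σ.2, rfl⟩)]
    simp [wt, len_encode]
  · intro x hx
    rw [Set.indicator_of_notMem]
    rintro ⟨σ, hσ, rfl⟩
    exact hx ⟨⟨σ, hσ⟩, rfl⟩

end RandProb

namespace RandProb

/-! ### The measure estimate -/

theorem core_measure (E : ℕ → Finset ℕ) (hE : Monotone E) (w : ℕ → ℝ) (hw : ∀ x, 0 ≤ w x)
    (m : ℕ) (B : ℝ) (hB : ∀ t, ∑ x ∈ E t with m ≤ x, w x ≤ B) :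
    volume {x : ℝ | ∃ s t, s ≤ t ∧ (∀ y ∈ E t, y ∉ E s → m ≤ y) ∧
      ∑ x ∈ E s, w x < x ∧ x < 2 * ∑ x ∈ E t, w x - ∑ x ∈ E s, w x} ≤ ENNReal.ofReal (2 * B) := by
  set a : ℕ → ℝ := fun t => ∑ x ∈ E t, w x with ha
  set b : ℕ → ℝ := fun t => ∑ x ∈ E t with m ≤ x, w x with hb
  have am : Monotone a := fun s t h => Finset.sum_le_sum_of_subset_of_nonneg (hE h)
    (fun x _ _ => hw x)
  have bm : Monotone b := fun s t h => Finset.sum_le_sum_of_subset_of_nonneg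
    (Finset.filter_subset_filter _ (hE h)) (fun x _ _ => hw x)
  have b0 : ∀ t, 0 ≤ b t := fun t => Finset.sum_nonneg fun x _ => hw x
  set C : ℕ → ℕ → Prop := fun s t => s ≤ t ∧ ∀ y ∈ E t, y ∉ E s → m ≤ y with hC
  have hab : ∀ s t, C s t → a t - a s = b t - b s := by
    rintro s t ⟨hst, h⟩
    have h1 : ∀ u, a u = b u + ∑ x ∈ E u with ¬ m ≤ x, w x := fun u =>
      (Finset.sum_filter_add_sum_filter_not _ _ _).symm
    have h2 : ({x ∈ E t | ¬ m ≤ x} : Finset ℕ) = {x ∈ E s | ¬ m ≤ x} := by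
      ext x
      simp only [Finset.mem_filter]
      constructor
      · rintro ⟨hx, hm⟩
        refine ⟨?_, hm⟩
        by_contra hxs
        exact hm (h x hx hxs)
      · rintro ⟨hx, hm⟩
        exact ⟨hE hst hx, hm⟩
    rw [h1 t, h1 s, h2]
    ring
  set V : ℕ → Set ℝ := fun N => {x : ℝ | ∃ s t, t < N ∧ C s t ∧ a s < x ∧ x < 2 * a t - a s} with hV
  have key : ∀ N, volume (V N) ≤ ENNReal.ofReal (2 * b N) := by
    intro N
    induction N using Nat.strong_induction_on with
    | _ N ih =>
      rcases N with _ | T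
      · have : V 0 = ∅ := by
          ext x; simp [hV]
        rw [this]; simp
      · have hex : ∃ s, C s T := ⟨T, le_rfl, fun y h h' => absurd h h'⟩
        set s0 := Nat.find hex with hs0
        have c0 : C s0 T := Nat.find_spec hex
        have hsub : V (T+1) ⊆ V s0 ∪ Set.Ioo (a s0) (2 * a T - a s0) := by
          rintro x ⟨s, t, ht, hc, hx1, hx2⟩
          by_cases h : t < s0
          · exact Or.inl ⟨s, t, h, hc, hx1, hx2⟩
          · right
            push Not at h
            have hc' : C s T := by
              refine ⟨by have := hc.1; omega, fun y hy hys => ?_⟩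
              by_cases hyt : y ∈ E t
              · exact hc.2 y hyt hys
              · exact c0.2 y hy fun h' => hyt (hE h h')
            have : s0 ≤ s := Nat.find_min' hex hc'
            have e1 := am this
            have e2 : a t ≤ a T := am (by omega)
            exact ⟨by linarith, by linarith⟩
        have hle : s0 ≤ T := c0.1
        calc volume (V (T+1)) ≤ volume (V s0) + volume (Set.Ioo (a s0) (2 * a T - a s0)) :=
              (measure_mono hsub).trans (measure_union_le _ _)
          _ ≤ ENNReal.ofReal (2 * b s0) + ENNReal.ofReal (2 * (b T - b s0)) := by
              refine add_le_add (ih s0 (by omega)) ?_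
              rw [Real.volume_Ioo]
              apply ENNReal.ofReal_le_ofReal
              have := hab _ _ c0
              linarith
          _ = ENNReal.ofReal (2 * b T) := by
              rw [← ENNReal.ofReal_add (by have := b0 s0; linarith) (by have := bm hle; linarith)]
              congr 1; ring
          _ ≤ ENNReal.ofReal (2 * b (T+1)) := by
              apply ENNReal.ofReal_le_ofReal
              have := bm (Nat.le_succ T)
              simp only [Nat.succ_eq_add_one] at this
              linarith
  have hU : {x : ℝ | ∃ s t, s ≤ t ∧ (∀ y ∈ E t, y ∉ E s → m ≤ y) ∧
      a s < x ∧ x < 2 * a t - a s} = ⋃ N, V N := by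
    ext x
    simp only [hV, Set.mem_iUnion, Set.mem_ofPred_eq]
    constructor
    · rintro ⟨s, t, h1, h2, h3, h4⟩
      exact ⟨t+1, s, t, by omega, ⟨h1, h2⟩, h3, h4⟩
    · rintro ⟨N, s, t, _, ⟨h1, h2⟩, h3, h4⟩
      exact ⟨s, t, h1, h2, h3, h4⟩
  have hVm : Monotone V := by
    rintro N M h x ⟨s, t, ht, r⟩
    exact ⟨s, t, by omega, r⟩
  refine (le_of_eq (congrArg volume hU)).trans ?_
  rw [hVm.measure_iUnion]
  refine iSup_le fun N => (key N).trans (ENNReal.ofReal_le_ofReal ?_)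
  have := hB N
  linarith

/-! ### The weight function on stages -/

/-- The finite set enumerated at a stage. -/
def stage (D : ℕ → List ℕ → Bool) (L : List ℕ) : Finset ℕ :=
  (Finset.range L.length).filter fun x => D x L = true

/-- Scaled weight of the part of a stage above `lo`. -/
def G (D : ℕ → List ℕ → Bool) (L : List ℕ) (N lo : ℕ) : ℕ :=
  ∑ x ∈ Finset.range L.length, if (lo ≤ x ∧ D x L = true) then 2 ^ (N - len x) else 0

theorem primrec_pow2 : Primrec (fun n : ℕ => 2 ^ n) := by
  have : Primrec (fun n : ℕ => (Nat.rec 1 (fun _ r => 2 * r) n : ℕ)) :=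
    Primrec.nat_rec' Primrec.id (Primrec.const 1)
      (Primrec.nat_mul.comp (Primrec.const 2) (Primrec.snd.comp Primrec.snd)).to₂
  refine this.of_eq fun n => ?_
  induction n with
  | zero => rfl
  | succ n ih => simp only [ih]; ring

theorem primrec_G {D : ℕ → List ℕ → Bool} (hD : Primrec₂ D) :
    Primrec (fun p : List ℕ × ℕ × ℕ => G D p.1 p.2.1 p.2.2) := by
  have hx : Primrec (fun q : (List ℕ × ℕ × ℕ) × ℕ × ℕ => q.2.1) := Primrec.fst.comp Primrec.snd
  have hL : Primrec (fun q : (List ℕ × ℕ × ℕ) × ℕ × ℕ => q.1.1) := Primrec.fst.comp Primrec.fst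
  have hN : Primrec (fun q : (List ℕ × ℕ × ℕ) × ℕ × ℕ => q.1.2.1) :=
    Primrec.fst.comp (Primrec.snd.comp Primrec.fst)
  have hl : Primrec (fun q : (List ℕ × ℕ × ℕ) × ℕ × ℕ => q.1.2.2) :=
    Primrec.snd.comp (Primrec.snd.comp Primrec.fst)
  have hc : PrimrecPred (fun q : (List ℕ × ℕ × ℕ) × ℕ × ℕ => q.1.2.2 ≤ q.2.1 ∧ D q.2.1 q.1.1 = true) :=
    (Primrec.nat_le.comp hl hx).and (Primrec.eq.comp (hD.comp hx hL) (Primrec.const true))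
  have ht : Primrec (fun q : (List ℕ × ℕ × ℕ) × ℕ × ℕ => q.2.2 +
      if (q.1.2.2 ≤ q.2.1 ∧ D q.2.1 q.1.1 = true) then 2 ^ (q.1.2.1 - len q.2.1) else 0) :=
    Primrec.nat_add.comp (Primrec.snd.comp Primrec.snd)
      (Primrec.ite hc (primrec_pow2.comp (Primrec.nat_sub.comp hN (primrec_len.comp hx)))
        (Primrec.const 0))
  have := Primrec.nat_rec' (f := fun p : List ℕ × ℕ × ℕ => p.1.length) (g := fun _ => 0)
    (Primrec.list_length.comp Primrec.fst) (Primrec.const 0) ht.to₂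
  refine this.of_eq fun p => ?_
  unfold G
  induction p.1.length with
  | zero => rfl
  | succ n ih => 
    rw [Finset.sum_range_succ, ← ih]

theorem G_eq (D : ℕ → List ℕ → Bool) (L : List ℕ) (N lo : ℕ) (h : L.length ≤ N) :
    (G D L N lo : ℝ) = (∑ x ∈ stage D L with lo ≤ x, wt x) * 2 ^ N := by
  unfold G stage
  rw [Finset.filter_filter, Finset.sum_filter, Finset.sum_mul]
  push_cast
  refine Finset.sum_congr rfl fun x hx => ?_
  have hx' : len x ≤ N := by
    have := len_le x
    have := Finset.mem_range.mp hx
    omega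
  by_cases hc : lo ≤ x ∧ D x L = true
  · rw [if_pos hc, if_pos ⟨hc.2, hc.1⟩, wt, inv_pow]
    rw [pow_sub₀ _ (by norm_num) hx']
    ring
  · rw [if_neg hc, if_neg (fun h => hc ⟨h.2, h.1⟩)]
    simp

theorem G_eq0 (D : ℕ → List ℕ → Bool) (L : List ℕ) (N : ℕ) (h : L.length ≤ N) :
    (G D L N 0 : ℝ) = (∑ x ∈ stage D L, wt x) * 2 ^ N := by
  rw [G_eq D L N 0 h]
  simp

end RandProb

namespace RandProb

/-! ### Coding of rationals -/

theorem encode_rat (p : ℚ) : Encodable.encode p = Nat.pair (Encodable.encode p.num) p.den := rfl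

theorem encode_int_nat (n : ℕ) : Encodable.encode (n : ℤ) = 2 * n := rfl

theorem encode_int_neg (n : ℕ) : Encodable.encode (Int.negSucc n) = 2 * n + 1 := rfl

theorem encode_rat_pair (p q : ℚ) :
    Encodable.encode (p, q) = Nat.pair (Encodable.encode p) (Encodable.encode q) := rfl

theorem encode_int_even (z : ℤ) (n : ℕ) (h : Encodable.encode z = 2 * n) : z = n := by
  rcases z with k | k
  · have : Encodable.encode (Int.ofNat k) = 2 * k := rfl
    have : k = n := by omega
    subst this; rfl
  · rw [encode_int_neg] at h; omega

/-! ### Good thresholds -/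

/-- `Good k m`: the weight of `S` above `m` is at most `2^-k`. -/
def Good (D : ℕ → List ℕ → Bool) (O : ℕ → ℕ) : Set ℕ :=
  {y | y ∉ {y | ∃ l, decide (2 ^ (seg O l).length <
    2 ^ y.unpair.1 * G D (seg O l) (seg O l).length y.unpair.2) = true}}

theorem good_ce {D : ℕ → List ℕ → Bool} (hD : Primrec₂ D) (O : ℕ → ℕ) :
    CeIn (jump O) (Good D O) := by
  apply CeIn.compl_jump
  have hp : PrimrecPred (fun q : ℕ × List ℕ => 2 ^ q.2.length <
      2 ^ q.1.unpair.1 * G D q.2 q.2.length q.1.unpair.2) := by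
    refine Primrec.nat_lt.comp (primrec_pow2.comp (Primrec.list_length.comp Primrec.snd)) ?_
    refine Primrec.nat_mul.comp (primrec_pow2.comp (Primrec.fst.comp
      (Primrec.unpair.comp Primrec.fst))) ?_
    exact (primrec_G hD).comp (Primrec.snd.pair ((Primrec.list_length.comp Primrec.snd).pair
      (Primrec.snd.comp (Primrec.unpair.comp Primrec.fst))))
  have hT : Computable₂ (fun (y : ℕ) (L : List ℕ) => decide (2 ^ L.length <
      2 ^ y.unpair.1 * G D L L.length y.unpair.2)) := by
    obtain ⟨_, h⟩ := hp
    exact (h.of_eq fun p => by congr).to_comp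
  exact CeIn.of_computable (D := fun (y : ℕ) (L : List ℕ) => decide (2 ^ L.length <
      2 ^ y.unpair.1 * G D L L.length y.unpair.2)) hT

theorem good_bound {D : ℕ → List ℕ → Bool} {O : ℕ → ℕ} {A : Set ℕ}
    (hm : ∀ m l l', l ≤ l' → D m (seg O l) = true → D m (seg O l') = true)
    (hA : ∀ m, m ∈ A ↔ ∃ l, D m (seg O l) = true) {k m : ℕ} (h : Nat.pair k m ∈ Good D O)
    (F : Finset ℕ) (hF : ∀ x ∈ F, x ∈ A) : ∑ x ∈ F with m ≤ x, wt x ≤ (2:ℝ)⁻¹ ^ k := by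
  have h1 : ∃ l, ∀ x ∈ F, D x (seg O l) = true ∧ x < l := by
    have : ∀ x : ℕ, ∃ l, x ∈ F → D x (seg O l) = true := by
      intro x
      by_cases hx : x ∈ F
      · obtain ⟨l, hl⟩ := (hA x).mp (hF x hx)
        exact ⟨l, fun _ => hl⟩
      · exact ⟨0, fun h => absurd h hx⟩
    choose l hl using this
    refine ⟨F.sup (fun x => l x + x + 1), fun x hx => ?_⟩
    have : l x + x + 1 ≤ F.sup (fun x => l x + x + 1) := Finset.le_sup (f := fun x => l x + x + 1) hx
    exact ⟨hm x (l x) _ (by omega) (hl x hx), by omega⟩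
  obtain ⟨l, hl⟩ := h1
  have h2 : 2 ^ k * G D (seg O l) l m ≤ 2 ^ l := by
    by_contra hcon
    apply h
    refine ⟨l, ?_⟩
    push Not at hcon
    simpa using hcon
  have h3 : (2:ℝ) ^ k * ((∑ x ∈ stage D (seg O l) with m ≤ x, wt x) * 2 ^ l) ≤ 2 ^ l := by
    rw [← G_eq D (seg O l) l m (by simp)]
    exact_mod_cast h2
  have h4 : ∑ x ∈ F with m ≤ x, wt x ≤ ∑ x ∈ stage D (seg O l) with m ≤ x, wt x := by
    apply Finset.sum_le_sum_of_subset_of_nonneg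
    · apply Finset.filter_subset_filter
      intro x hx
      simp only [stage, Finset.mem_filter, Finset.mem_range, seg_length]
      exact ⟨(hl x hx).2, (hl x hx).1⟩
    · exact fun x _ _ => (wt_pos x).le
  refine h4.trans ?_
  rw [inv_pow, ← one_div, le_div_iff₀ (by positivity)]
  have hp : (0:ℝ) < 2 ^ l := by positivity
  nlinarith

theorem good_exists {D : ℕ → List ℕ → Bool} {O : ℕ → ℕ} {A : Set ℕ}
    (hA : ∀ m, m ∈ A ↔ ∃ l, D m (seg O l) = true) (hs : Summable (Set.indicator A wt)) (k : ℕ) :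
    ∃ m, Nat.pair k m ∈ Good D O := by
  have hk : (0:ℝ) < (2:ℝ)⁻¹ ^ k := by positivity
  obtain ⟨F, hF⟩ := summable_iff_vanishing_norm.mp hs _ hk
  refine ⟨F.sup id + 1, ?_⟩
  rintro ⟨l, hl⟩
  simp only [seg_length, Nat.unpair_pair, decide_eq_true_eq] at hl
  have h1 := hF ({x ∈ stage D (seg O l) | F.sup id + 1 ≤ x}) (by
    rw [Finset.disjoint_left]
    intro x hx hxF
    have := Finset.le_sup (f := id) hxF
    simp only [id] at this
    have := (Finset.mem_filter.mp hx).2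
    omega)
  rw [Finset.sum_congr rfl (g := wt)] at h1
  · have h2 : (2:ℝ) ^ l < 2 ^ k * (G D (seg O l) l (F.sup id + 1) : ℕ) := by exact_mod_cast hl
    rw [G_eq D (seg O l) l _ (by simp)] at h2
    have h3 := lt_of_abs_lt h1
    rw [inv_pow, ← one_div, lt_div_iff₀ (by positivity)] at h3
    have hp : (0:ℝ) < 2 ^ l := by positivity
    nlinarith
  · intro x hx
    apply Set.indicator_of_mem
    rw [hA]
    have := (Finset.mem_filter.mp hx).1
    exact ⟨l, (Finset.mem_filter.mp this).2⟩

/-! ### The test -/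

/-- The decidable part of the test. -/
def Tst (D : ℕ → List ℕ → Bool) (_i cp cq m s t : ℕ) (L : List ℕ) : Prop :=
  s ≤ t ∧ G D L t m + G D (L.take s) t 0 = G D (L.take s) t m + G D L t 0 ∧
  (cp.unpair.1 % 2 = 0 ∧ cp.unpair.1 / 2 * 2 ^ t = G D (L.take s) t 0 * cp.unpair.2) ∧
  (cq.unpair.1 % 2 = 0 ∧ cq.unpair.1 / 2 * 2 ^ t + G D (L.take s) t 0 * cq.unpair.2
    = 2 * G D L t 0 * cq.unpair.2)

/-- The test set, before projecting. -/
def TstSet (D : ℕ → List ℕ → Bool) (P : ℕ → ℕ) : Set ℕ :=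
  {w | Tst D w.unpair.1.unpair.1 w.unpair.1.unpair.2.unpair.1 w.unpair.1.unpair.2.unpair.2
    w.unpair.2.unpair.1 w.unpair.2.unpair.2.unpair.1 w.unpair.2.unpair.2.unpair.2
    (seg P w.unpair.2.unpair.2.unpair.2)}

theorem tst_ce {D : ℕ → List ℕ → Bool} (hD : Primrec₂ D) (P : ℕ → ℕ) : CeIn P (TstSet D P) := by
  have u1 : Primrec (fun n : ℕ => n.unpair.1) := Primrec.fst.comp Primrec.unpair
  have u2 : Primrec (fun n : ℕ => n.unpair.2) := Primrec.snd.comp Primrec.unpair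
  have hp : PrimrecPred (fun q : ℕ × List ℕ =>
      Tst D q.1.unpair.1.unpair.1 q.1.unpair.1.unpair.2.unpair.1 q.1.unpair.1.unpair.2.unpair.2
    q.1.unpair.2.unpair.1 q.1.unpair.2.unpair.2.unpair.1 q.1.unpair.2.unpair.2.unpair.2 q.2) := by
    have w : Primrec (fun q : ℕ × List ℕ => q.1) := Primrec.fst
    have L : Primrec (fun q : ℕ × List ℕ => q.2) := Primrec.snd
    have cp := u1.comp (u2.comp (u1.comp w))
    have cq := u2.comp (u2.comp (u1.comp w))
    have m := u1.comp (u2.comp w)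
    have s := u1.comp (u2.comp (u2.comp w))
    have t := u2.comp (u2.comp (u2.comp w))
    have Ls : Primrec (fun q : ℕ × List ℕ => q.2.take q.1.unpair.2.unpair.2.unpair.1) :=
      Primrec.list_take.comp s L
    have G1 := (primrec_G hD).comp (L.pair (t.pair m))
    have G2 := (primrec_G hD).comp (Ls.pair (t.pair (Primrec.const 0)))
    have G3 := (primrec_G hD).comp (Ls.pair (t.pair m))
    have G4 := (primrec_G hD).comp (L.pair (t.pair (Primrec.const 0)))
    have two : Primrec (fun q : ℕ × List ℕ => 2) := Primrec.const 2
    have pt := primrec_pow2.comp t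
    refine (Primrec.nat_le.comp s t).and (((Primrec.eq.comp (Primrec.nat_add.comp G1 G2)
      (Primrec.nat_add.comp G3 G4))).and (PrimrecPred.and ?_ ?_))
    · exact (Primrec.eq.comp (Primrec.nat_mod.comp (u1.comp cp) two) (Primrec.const 0)).and
        (Primrec.eq.comp (Primrec.nat_mul.comp (Primrec.nat_div.comp (u1.comp cp) two) pt)
          (Primrec.nat_mul.comp G2 (u2.comp cp)))
    · exact (Primrec.eq.comp (Primrec.nat_mod.comp (u1.comp cq) two) (Primrec.const 0)).and
        (Primrec.eq.comp (Primrec.nat_add.comp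
          (Primrec.nat_mul.comp (Primrec.nat_div.comp (u1.comp cq) two) pt)
            (Primrec.nat_mul.comp G2 (u2.comp cq)))
          (Primrec.nat_mul.comp (Primrec.nat_mul.comp two G4) (u2.comp cq)))
  have hT : Computable₂ (fun (w : ℕ) (L : List ℕ) => decide (Tst D
    w.unpair.1.unpair.1 w.unpair.1.unpair.2.unpair.1 w.unpair.1.unpair.2.unpair.2
    w.unpair.2.unpair.1 w.unpair.2.unpair.2.unpair.1 w.unpair.2.unpair.2.unpair.2 L)) := by
    obtain ⟨_, h⟩ := hp
    exact (h.of_eq fun p => by congr).to_comp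
  have ht : Computable (fun w : ℕ => w.unpair.2.unpair.2.unpair.2) :=
    (u2.comp (u2.comp u2)).to_comp
  have := CeIn.of_stage (O := P) hT ht
  simpa [TstSet] using this

/-- The full test. -/
def W0 (DS DV : ℕ → List ℕ → Bool) (O P : ℕ → ℕ) : Set ℕ :=
  {y | ∃ z, Nat.pair y z ∈ {w | w ∈ {w : ℕ | Nat.pair (w.unpair.1.unpair.1 + 1) w.unpair.2.unpair.1 ∈
    Good DS O} ∧ w ∈ TstSet DV P}}

theorem W0_ce {DS DV : ℕ → List ℕ → Bool} (hS : Primrec₂ DS) (hV : Primrec₂ DV) (O : ℕ → ℕ) :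
    CeIn (jump O) (W0 DS DV O (jump O)) := by
  have u1 : Primrec (fun n : ℕ => n.unpair.1) := Primrec.fst.comp Primrec.unpair
  have u2 : Primrec (fun n : ℕ => n.unpair.2) := Primrec.snd.comp Primrec.unpair
  apply CeIn.ex
  refine CeIn.inter ?_ (tst_ce hV _)
  exact CeIn.comp (f := fun w : ℕ => Nat.pair (w.unpair.1.unpair.1 + 1) w.unpair.2.unpair.1)
    (good_ce hS O)
    (Primrec₂.natPair.comp (Primrec.succ.comp (u1.comp u1)) (u1.comp u2)).to_comp

end RandProb

namespace RandProb

theorem ratcode_even (p : ℚ) (h : (Encodable.encode p).unpair.1 % 2 = 0) : 0 ≤ p := by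
  rw [encode_rat, Nat.unpair_pair] at h
  have := encode_int_even p.num (Encodable.encode p.num / 2) (by simp only at h; omega)
  rw [← Rat.num_nonneg, this]
  positivity

theorem ratcode_pos (p : ℚ) (h : 0 ≤ p) : (Encodable.encode p).unpair.1 % 2 = 0 ∧
    (p : ℝ) * (Encodable.encode p).unpair.2 = ((Encodable.encode p).unpair.1 / 2 : ℕ) ∧
    (0:ℝ) < (Encodable.encode p).unpair.2 := by
  rw [encode_rat, Nat.unpair_pair]
  obtain ⟨n, hn⟩ := Int.eq_ofNat_of_zero_le (Rat.num_nonneg.mpr h)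
  rw [hn, encode_int_nat]
  refine ⟨by simp, ?_, by simpa using p.den_pos⟩
  simp only [Nat.mul_div_cancel_left n (show 0 < 2 by norm_num)]
  have : (p * p.den : ℚ) = p.num := Rat.mul_den_eq_num p
  rw [hn] at this
  exact_mod_cast this

theorem tst_iff (D : ℕ → List ℕ → Bool) (P : ℕ → ℕ)
    (hE : Monotone fun t => stage D (seg P t)) (i m s t : ℕ) (p q : ℚ) :
    Tst D i (Encodable.encode p) (Encodable.encode q) m s t (seg P t) ↔
    s ≤ t ∧ (∀ y ∈ stage D (seg P t), y ∉ stage D (seg P s) → m ≤ y) ∧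
    (p : ℝ) = ∑ x ∈ stage D (seg P s), wt x ∧
    (q : ℝ) = 2 * ∑ x ∈ stage D (seg P t), wt x - ∑ x ∈ stage D (seg P s), wt x := by
  unfold Tst
  refine and_congr_right fun hst => ?_
  rw [seg_take P s t hst]
  have hp2 : (0:ℝ) < 2 ^ t := by positivity
  have hsub : stage D (seg P s) ⊆ stage D (seg P t) := hE hst
  have gs0 := G_eq0 D (seg P s) t (by simpa using hst)
  have gt0 := G_eq0 D (seg P t) t (by simp)
  have gsm := G_eq D (seg P s) t m (by simpa using hst)
  have gtm := G_eq D (seg P t) t m (by simp)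
  have sp : ∀ u, ∑ x ∈ stage D (seg P u), wt x = (∑ x ∈ stage D (seg P u) with m ≤ x, wt x) +
      ∑ x ∈ stage D (seg P u) with ¬ m ≤ x, wt x := fun u =>
      (Finset.sum_filter_add_sum_filter_not _ _ _).symm
  have nonneg : ∀ u, 0 ≤ ∑ x ∈ stage D (seg P u), wt x := fun u =>
    Finset.sum_nonneg fun x _ => (wt_pos x).le
  have mono : ∑ x ∈ stage D (seg P s), wt x ≤ ∑ x ∈ stage D (seg P t), wt x :=
    Finset.sum_le_sum_of_subset_of_nonneg hsub fun x _ _ => (wt_pos x).le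
  refine and_congr ?_ (and_congr ?_ ?_)
  · rw [← @Nat.cast_inj ℝ]
    push_cast
    rw [gs0, gt0, gsm, gtm]
    have h1 : ({x ∈ stage D (seg P s) | ¬ m ≤ x} : Finset ℕ) ⊆ {x ∈ stage D (seg P t) | ¬ m ≤ x} :=
      Finset.filter_subset_filter _ hsub
    constructor
    · intro h y hy hys
      by_contra hm
      have : ∑ x ∈ stage D (seg P s) with ¬ m ≤ x, wt x < ∑ x ∈ stage D (seg P t) with ¬ m ≤ x, wt x :=
        Finset.sum_lt_sum_of_subset h1 (i := y) (Finset.mem_filter.mpr ⟨hy, hm⟩)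
          (fun h => hys (Finset.mem_filter.mp h).1) (wt_pos y) (fun x _ _ => (wt_pos x).le)
      have e1 := sp s
      have e2 := sp t
      nlinarith
    · intro h
      have h2 : ({x ∈ stage D (seg P t) | ¬ m ≤ x} : Finset ℕ) = {x ∈ stage D (seg P s) | ¬ m ≤ x} := by
        refine Finset.Subset.antisymm (fun x hx => ?_) h1
        rw [Finset.mem_filter] at hx ⊢
        refine ⟨?_, hx.2⟩
        by_contra hxs
        exact hx.2 (h x hx.1 hxs)
      rw [sp s, sp t, h2]
      ring
  · constructor
    · rintro ⟨h1, h2⟩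
      obtain ⟨_, h3, h4⟩ := ratcode_pos p (ratcode_even p h1)
      have h5 : (((Encodable.encode p).unpair.1 / 2 : ℕ) : ℝ) * 2 ^ t =
        G D (seg P s) t 0 * (Encodable.encode p).unpair.2 := by exact_mod_cast h2
      rw [← h3, gs0] at h5
      have : ((p:ℝ) - ∑ x ∈ stage D (seg P s), wt x) * (((Encodable.encode p).unpair.2 : ℝ) * 2 ^ t) = 0 := by
        linear_combination h5
      rcases mul_eq_zero.mp this with h | h
      · linarith
      · exact absurd h (by positivity)
    · intro h
      have h0 : 0 ≤ p := by
        have : (0:ℝ) ≤ p := by rw [h]; exact nonneg s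
        exact_mod_cast this
      obtain ⟨h1, h3, h4⟩ := ratcode_pos p h0
      refine ⟨h1, ?_⟩
      have : (((Encodable.encode p).unpair.1 / 2 : ℕ) : ℝ) * 2 ^ t =
        G D (seg P s) t 0 * (Encodable.encode p).unpair.2 := by
        rw [← h3, gs0, h]; ring
      exact_mod_cast this
  · constructor
    · rintro ⟨h1, h2⟩
      obtain ⟨_, h3, h4⟩ := ratcode_pos q (ratcode_even q h1)
      have h5 : (((Encodable.encode q).unpair.1 / 2 : ℕ) : ℝ) * 2 ^ t +
        G D (seg P s) t 0 * (Encodable.encode q).unpair.2 =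
        2 * G D (seg P t) t 0 * (Encodable.encode q).unpair.2 := by exact_mod_cast h2
      rw [← h3, gs0, gt0] at h5
      have : ((q:ℝ) + ∑ x ∈ stage D (seg P s), wt x - 2 * ∑ x ∈ stage D (seg P t), wt x) *
          (((Encodable.encode q).unpair.2 : ℝ) * 2 ^ t) = 0 := by
        linear_combination h5
      rcases mul_eq_zero.mp this with h | h
      · linarith
      · exact absurd h (by positivity)
    · intro h
      have h0 : 0 ≤ q := by
        have : (0:ℝ) ≤ q := by rw [h]; have := nonneg t; linarith
        exact_mod_cast this
      obtain ⟨h1, h3, h4⟩ := ratcode_pos q h0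
      refine ⟨h1, ?_⟩
      have : (((Encodable.encode q).unpair.1 / 2 : ℕ) : ℝ) * 2 ^ t +
        G D (seg P s) t 0 * (Encodable.encode q).unpair.2 =
        2 * G D (seg P t) t 0 * (Encodable.encode q).unpair.2 := by
        rw [← h3, gs0, gt0, h]; ring
      exact_mod_cast this

/-- A rational interval test around a dyadic rational. -/
theorem dyadic_not_random (P : ℕ → ℕ) (A t : ℕ) : ¬ MLRandomIn P ((A : ℝ) / 2 ^ t) := by
  -- endpoints
  let lo : ℕ → ℚ := fun i => ((A * 2 ^ (i+1) : ℤ) - 1 : ℤ) / (2 ^ (t + (i+1)) : ℕ)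
  let hi : ℕ → ℚ := fun i => ((A * 2 ^ (i+1) : ℤ) + 1 : ℤ) / (2 ^ (t + (i+1)) : ℕ)
  have cop : ∀ (z : ℤ) (n : ℕ), z % 2 = 1 → Encodable.encode ((z : ℚ) / (2 ^ n : ℕ)) =
      Nat.pair (Encodable.encode z) (2 ^ n) := by
    intro z n hz
    have hc : Nat.Coprime z.natAbs ((2 ^ n : ℕ) : ℤ).natAbs := by
      rw [Int.natAbs_natCast]
      apply Nat.Coprime.pow_right
      refine Nat.Coprime.symm ((Nat.Prime.coprime_iff_not_dvd Nat.prime_two).mpr ?_)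
      omega
    have hpos : (0:ℤ) < ((2 ^ n : ℕ) : ℤ) := by positivity
    have e1 := Rat.num_div_eq_of_coprime hpos hc
    have e2 := Rat.den_div_eq_of_coprime hpos hc
    rw [encode_rat]
    congr 1
    · rw [Int.cast_natCast] at e1
      rw [e1]
    · rw [Int.cast_natCast] at e2
      exact_mod_cast e2
  let F : ℕ → ℕ := fun i => Nat.pair
    (Nat.pair (if A = 0 then 1 else 2 * (A * 2 ^ (i+1) - 1)) (2 ^ (t + (i+1))))
    (Nat.pair (2 * (A * 2 ^ (i+1) + 1)) (2 ^ (t + (i+1))))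
  have hF : ∀ i, Encodable.encode (lo i, hi i) = F i := by
    intro i
    have o1 : ((A * 2 ^ (i+1) : ℤ) - 1) % 2 = 1 := by rw [pow_succ, ← mul_assoc]; omega
    have o2 : ((A * 2 ^ (i+1) : ℤ) + 1) % 2 = 1 := by rw [pow_succ, ← mul_assoc]; omega
    rw [encode_rat_pair, cop _ _ o1, cop _ _ o2]
    have x2 : Encodable.encode ((A * 2 ^ (i+1) : ℤ) + 1) = 2 * (A * 2 ^ (i+1) + 1) := by
      rw [← encode_int_nat]; norm_cast
    have x1 : Encodable.encode ((A * 2 ^ (i+1) : ℤ) - 1) =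
        if A = 0 then 1 else 2 * (A * 2 ^ (i+1) - 1) := by
      split_ifs with h
      · rw [h]
        simpa using encode_int_neg 0
      · rw [← encode_int_nat]
        have : 1 ≤ A * 2 ^ (i+1) := Nat.one_le_iff_ne_zero.mpr (by positivity)
        push_cast [this]
        rfl
    rw [x1, x2]
  have hFc : Primrec F := by
    have p1 : Primrec (fun i : ℕ => 2 ^ (i+1)) := primrec_pow2.comp Primrec.succ
    have p2 : Primrec (fun i : ℕ => 2 ^ (t + (i+1))) :=
      primrec_pow2.comp (Primrec.nat_add.comp (Primrec.const t) Primrec.succ)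
    have p3 : Primrec (fun i : ℕ => A * 2 ^ (i+1)) := Primrec.nat_mul.comp (Primrec.const A) p1
    refine Primrec₂.natPair.comp (Primrec₂.natPair.comp ?_ p2) (Primrec₂.natPair.comp ?_ p2)
    · by_cases hA : A = 0
      · simp only [hA, if_true]; exact Primrec.const 1
      · simp only [hA, if_false]
        exact Primrec.nat_mul.comp (Primrec.const 2) (Primrec.nat_sub.comp p3 (Primrec.const 1))
    · exact Primrec.nat_mul.comp (Primrec.const 2) (Primrec.succ.comp p3)
  let T : ℕ → List ℕ → Bool := fun y _ => decide (y.unpair.2 = F y.unpair.1)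
  have hT : Computable₂ T := by
    have : PrimrecPred (fun q : ℕ × List ℕ => q.1.unpair.2 = F q.1.unpair.1) :=
      Primrec.eq.comp (Primrec.snd.comp (Primrec.unpair.comp Primrec.fst))
        (hFc.comp (Primrec.fst.comp (Primrec.unpair.comp Primrec.fst)))
    obtain ⟨_, h⟩ := this
    exact (h.of_eq fun p => by congr).to_comp
  intro hR
  have hce := CeIn.of_stage (O := P) hT (Computable.const 0)
  have hmem : ∀ i, testSet {m | T m (seg P 0) = true} i = Set.Ioo (lo i : ℝ) (hi i : ℝ) := by
    intro i
    ext x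
    simp only [testSet, Set.mem_ofPred_eq, T, Nat.unpair_pair, decide_eq_true_eq, ← hF]
    constructor
    · rintro ⟨p, q, h, h1, h2⟩
      have := Encodable.encode_injective h
      rw [Prod.mk.injEq] at this
      rw [← this.1, ← this.2]
      exact ⟨h1, h2⟩
    · rintro ⟨h1, h2⟩
      exact ⟨lo i, hi i, rfl, h1, h2⟩
  have hlo : ∀ i, (lo i : ℝ) = (A : ℝ) / 2 ^ t - 1 / 2 ^ (t + (i+1)) := by
    intro i
    simp only [lo]
    push_cast
    rw [pow_add]
    field_simp
    ring
  have hhi : ∀ i, (hi i : ℝ) = (A : ℝ) / 2 ^ t + 1 / 2 ^ (t + (i+1)) := by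
    intro i
    simp only [hi]
    push_cast
    rw [pow_add]
    field_simp
    ring
  obtain ⟨i, hi'⟩ := hR _ hce (by
    intro i
    rw [hmem, Real.volume_Ioo, hlo, hhi]
    apply ENNReal.ofReal_le_ofReal
    have : (1:ℝ) / 2 ^ (t + (i+1)) ≤ 1 / 2 ^ (i+1) := by
      apply one_div_le_one_div_of_le (by positivity)
      exact pow_le_pow_right₀ (by norm_num) (by omega)
    have e : (1:ℝ) / 2 ^ (i+1) = (2:ℝ)⁻¹ ^ i / 2 := by rw [pow_succ, inv_pow]; field_simp
    linarith)
  apply hi'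
  rw [hmem, hlo, hhi]
  have : (0:ℝ) < 1 / 2 ^ (t + (i+1)) := by positivity
  constructor <;> linarith

theorem core (O : ℕ → ℕ) (S V : Set (List Bool)) (hS : CeIn O (strCodes S)) (pS : IsPrefixFree S)
    (hVS : V ⊆ S) (hV : CeIn (jump O) (strCodes V)) : ¬ MLRandomIn (jump O) (muR (cyl V)) := by
  have pV : IsPrefixFree V := fun σ hσ τ hτ h => pS σ (hVS hσ) τ (hVS hτ) h
  have cVS : strCodes V ⊆ strCodes S := fun x ⟨σ, hσ, e⟩ => ⟨σ, hVS hσ, e⟩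
  obtain ⟨DS, pDS, mDS, eDS⟩ := hS.normal
  obtain ⟨DV, pDV, mDV, eDV⟩ := hV.normal
  set P := jump O with hP
  set α := muR (cyl V) with hα
  have sumV := hasSum_cyl pV
  have sumS := hasSum_cyl pS
  rw [← hα] at sumV
  let E : ℕ → Finset ℕ := fun t => stage DV (seg P t)
  have hE : Monotone E := by
    intro s t h x hx
    simp only [E, stage, Finset.mem_filter, Finset.mem_range, seg_length] at hx ⊢
    exact ⟨by omega, mDV _ _ _ h hx.2⟩
  have hEV : ∀ t, ∀ x ∈ E t, x ∈ strCodes V := by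
    intro t x hx
    simp only [E, stage, Finset.mem_filter] at hx
    exact (eDV x).mpr ⟨t, hx.2⟩
  have hVE : ∀ F : Finset ℕ, (∀ x ∈ F, x ∈ strCodes V) → ∃ t, F ⊆ E t := by
    intro F hF
    have : ∀ x : ℕ, ∃ l, x ∈ F → DV x (seg P l) = true := by
      intro x
      by_cases hx : x ∈ F
      · obtain ⟨l, hl⟩ := (eDV x).mp (hF x hx)
        exact ⟨l, fun _ => hl⟩
      · exact ⟨0, fun h => absurd h hx⟩
    choose l hl using this
    refine ⟨F.sup (fun x => l x + x + 1), fun x hx => ?_⟩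
    have : l x + x + 1 ≤ F.sup (fun x => l x + x + 1) := Finset.le_sup (f := fun x => l x + x + 1) hx
    simp only [E, stage, Finset.mem_filter, Finset.mem_range, seg_length]
    exact ⟨by omega, mDV x (l x) _ (by omega) (hl x hx)⟩
  have hsumE : ∀ F : Finset ℕ, (∀ x ∈ F, x ∈ strCodes V) →
      ∑ x ∈ F, Set.indicator (strCodes V) wt x = ∑ x ∈ F, wt x := fun F hF =>
    Finset.sum_congr rfl fun x hx => Set.indicator_of_mem (hF x hx) _
  have indnn : ∀ x, 0 ≤ Set.indicator (strCodes V) wt x := fun x =>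
    Set.indicator_nonneg (fun y _ => (wt_pos y).le) x
  have ale : ∀ t, ∑ x ∈ E t, wt x ≤ α := by
    intro t
    rw [← hsumE _ (hEV t)]
    exact sum_le_hasSum _ (fun x _ => indnn x) sumV
  have amono : ∀ s t, s ≤ t → ∑ x ∈ E s, wt x ≤ ∑ x ∈ E t, wt x := fun s t h =>
    Finset.sum_le_sum_of_subset_of_nonneg (hE h) fun x _ _ => (wt_pos x).le
  have alim : ∀ c, c < α → ∃ t, c < ∑ x ∈ E t, wt x := by
    intro c hc
    have := (sumV : Filter.Tendsto _ _ _).eventually (lt_mem_nhds hc)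
    obtain ⟨F, hF⟩ := this.exists
    have hF' : c < ∑ x ∈ F with x ∈ strCodes V, wt x := by
      rw [Finset.sum_filter]
      refine lt_of_lt_of_eq hF (Finset.sum_congr rfl fun x _ => ?_)
      simp [Set.indicator_apply]
    obtain ⟨t, ht⟩ := hVE {x ∈ F | x ∈ strCodes V} (fun x hx => (Finset.mem_filter.mp hx).2)
    exact ⟨t, lt_of_lt_of_le hF'
      (Finset.sum_le_sum_of_subset_of_nonneg ht fun x _ _ => (wt_pos x).le)⟩
  by_cases hdy : ∃ s, ∑ x ∈ E s, wt x = α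
  · obtain ⟨s, hs⟩ := hdy
    have h := G_eq0 DV (seg P s) s (by simp)
    have : α = (G DV (seg P s) s 0 : ℝ) / 2 ^ s := by
      rw [h, ← hs]
      field_simp
      rfl
    rw [this]
    exact dyadic_not_random _ _ _
  have alt : ∀ t, ∑ x ∈ E t, wt x < α := fun t => lt_of_le_of_ne (ale t) fun h => hdy ⟨t, h⟩
  have good := fun k => good_exists eDS sumS.summable k
  have hspec : ∀ i x, x ∈ testSet (W0 DS DV O P) i ↔ ∃ m s t, Nat.pair (i+1) m ∈ Good DS O ∧
      s ≤ t ∧ (∀ y ∈ E t, y ∉ E s → m ≤ y) ∧ ∑ x ∈ E s, wt x < x ∧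
      x < 2 * ∑ x ∈ E t, wt x - ∑ x ∈ E s, wt x := by
    intro i x
    constructor
    · rintro ⟨p, q, ⟨z, hz1, hz2⟩, h1, h2⟩
      simp only [Set.mem_ofPred_eq, TstSet, Nat.unpair_pair, encode_rat_pair] at hz1 hz2
      rw [tst_iff DV P hE] at hz2
      obtain ⟨e1, e2, e3, e4⟩ := hz2
      refine ⟨_, _, _, hz1, e1, e2, ?_, ?_⟩
      · rw [e3] at h1; exact h1
      · rw [e4] at h2; exact h2
    · rintro ⟨m, s, t, hg, e1, e2, h1, h2⟩
      have r1 : (((G DV (seg P s) t 0 : ℚ) / 2 ^ t : ℚ) : ℝ) = ∑ x ∈ E s, wt x := by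
        push_cast
        rw [G_eq0 DV (seg P s) t (by simpa using e1)]
        field_simp
        rfl
      have r2 : (((G DV (seg P t) t 0 : ℚ) / 2 ^ t : ℚ) : ℝ) = ∑ x ∈ E t, wt x := by
        push_cast
        rw [G_eq0 DV (seg P t) t (by simp)]
        field_simp
        rfl
      have r3 : ((2 * ((G DV (seg P t) t 0 : ℚ) / 2 ^ t) - (G DV (seg P s) t 0 : ℚ) / 2 ^ t : ℚ) : ℝ) =
          2 * ∑ x ∈ E t, wt x - ∑ x ∈ E s, wt x := by
        rw [← r1, ← r2]; push_cast; ring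
      refine ⟨_, _, ⟨Nat.pair m (Nat.pair s t), ?_, ?_⟩, by rw [r1]; exact h1, by rw [r3]; exact h2⟩
      · simpa using hg
      · simp only [TstSet, Set.mem_ofPred_eq, Nat.unpair_pair, encode_rat_pair]
        rw [tst_iff DV P hE]
        exact ⟨e1, e2, r1, r3⟩
  intro hR
  obtain ⟨i, hi⟩ := hR _ (W0_ce pDS pDV O) (by
    intro i
    set m0 := Nat.find (good (i+1)) with hm0
    have g0 : Nat.pair (i+1) m0 ∈ Good DS O := Nat.find_spec (good (i+1))
    have hb := core_measure E hE wt (fun x => (wt_pos x).le) m0 ((2:ℝ)⁻¹ ^ (i+1)) (fun t =>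
      good_bound mDS eDS g0 (E t) (fun x hx => cVS (hEV t x hx)))
    have e : 2 * (2:ℝ)⁻¹ ^ (i+1) = (2:ℝ)⁻¹ ^ i := by rw [pow_succ]; ring
    rw [e] at hb
    refine (measure_mono ?_).trans hb
    intro x hx
    obtain ⟨m, s, t, hg, e1, e2, h1, h2⟩ := (hspec i x).mp hx
    have : m0 ≤ m := Nat.find_min' (good (i+1)) hg
    exact ⟨s, t, e1, fun y hy hys => this.trans (e2 y hy hys), h1, h2⟩)
  apply hi
  rw [hspec]
  obtain ⟨m, hm⟩ := good (i+1)
  obtain ⟨s, hs⟩ := hVE {x ∈ Finset.range m | x ∈ strCodes V}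
    (fun x hx => (Finset.mem_filter.mp hx).2)
  have has := alt s
  obtain ⟨t, ht⟩ := alim ((α + ∑ x ∈ E s, wt x) / 2) (by linarith)
  have hst : s ≤ t := by
    by_contra h
    have := amono t s (by omega)
    linarith
  refine ⟨m, s, t, hm, hst, fun y hy hys => ?_, has, by linarith⟩
  by_contra hlt
  push Not at hlt
  exact hys (hs (Finset.mem_filter.mpr ⟨Finset.mem_range.mpr hlt, hEV t y hy⟩))

end RandProb

namespace RandProb

/-- **No random measures of simple subsets of prefix-free sets.**
No c.e. prefix-free set of strings contains a `Σ^0_1(∅')` subset of 2-random measure;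
more generally, for each `n`, no `Σ^0_{n+1}` prefix-free set of strings contains a
`Σ^0_{n+2}` subset whose measure is an `(n+2)`-random real. -/
theorem no_random_subset_measure :
    (∀ S : Set (List Bool), SigmaStr 1 S → IsPrefixFree S →
      ∀ V : Set (List Bool), V ⊆ S → CeStrIn (iterJump 1) V →
        ¬ NRandom 2 (muR (cyl V))) ∧
    (∀ (n : ℕ) (S : Set (List Bool)), SigmaStr (n + 1) S → IsPrefixFree S →
      ∀ V : Set (List Bool), V ⊆ S → SigmaStr (n + 2) V →
        ¬ NRandom (n + 2) (muR (cyl V))) := by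
  constructor
  · rintro S ⟨c, hc⟩ pS V hVS hV
    refine core (iterJump 0) S V ?_ pS hVS hV
    rw [hc]
    exact sigma_ceIn 0 c
  · rintro n S ⟨c, hc⟩ pS V hVS ⟨d, hd⟩
    refine core (iterJump n) S V ?_ pS hVS ?_
    · rw [hc]
      exact sigma_ceIn n c
    · rw [hd]
      exact sigma_ceIn (n+1) d

end RandProb
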